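/- Let H be either H1 or H2. For all integers k ≥ 1 and r with 0 ≤ r ≤ k such that k−r is even and r is odd, GR_k((k−r)K3, rH) = 4·5^((k−r)/2)·17^((r−1)/2) + 1. -/

import Mathlib

open SimpleGraph

/-- A rainbow triangle in an edge-coloring of a complete graph: three distinct
vertices whose three pairwise edges receive three pairwise distinct colors. -/
def HasRainbowTriangle {n k : ℕ} (c : Fin n → Fin n → Fin k) : Prop :=
  ∃ u v w : Fin n, u ≠ v ∧ u ≠ w ∧ v ≠ w ∧
    c u v ≠ c u w ∧ c u v ≠ c v w ∧ c u w ≠ c v w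

/-- A Gallai `k`-coloring of `K_n`: a symmetric edge-coloring with no rainbow triangle. -/
def IsGallaiColoring {n k : ℕ} (c : Fin n → Fin n → Fin k) : Prop :=
  (∀ u v, c u v = c v u) ∧ ¬ HasRainbowTriangle c

/-- A monochromatic copy of the graph `F` in color `i`: an injection of the vertices
of `F` into the vertices of `K_n` mapping every edge of `F` to an edge colored `i`. -/
def HasMonoCopy {V : Type} (F : SimpleGraph V) {n k : ℕ}
    (c : Fin n → Fin n → Fin k) (i : Fin k) : Prop :=
  ∃ f : V → Fin n, Function.Injective f ∧ ∀ a b, F.Adj a b → c (f a) (f b) = i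

/-- The Gallai-Ramsey number `GR(F₁, …, F_k)`: the least `n` such that every Gallai
`k`-coloring of `K_n` contains, for some color `i`, a monochromatic copy of `Fᵢ`
in color `i`. -/
noncomputable def GR (k : ℕ) (F : Fin k → Σ V : Type, SimpleGraph V) : ℕ :=
  sInf {n : ℕ | ∀ c : Fin n → Fin n → Fin k, IsGallaiColoring c →
    ∃ i : Fin k, HasMonoCopy (F i).2 c i}

/-- The triangle `K₃`. -/
def GK3 : SimpleGraph (Fin 3) := ⊤

/-- The path `P₃` on three vertices (edges 0–1 and 1–2). -/
def GP3 : SimpleGraph (Fin 3) := SimpleGraph.fromRel (fun a _ => a = 1)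

/-- `H₁`: a `K₄` on `{0,1,2,3}` together with the extra vertex `4` adjacent to
exactly the vertex `3`. -/
def GH1 : SimpleGraph (Fin 5) :=
  SimpleGraph.fromRel (fun a b => (a ≠ 4 ∧ b ≠ 4) ∨ (a = 3 ∧ b = 4))

/-- `H₂`: `K₅` minus the two edges 0–1 and 1–2 of a path on three vertices. -/
def GH2 : SimpleGraph (Fin 5) :=
  (⊤ : SimpleGraph (Fin 5)) \
    SimpleGraph.fromRel (fun a b => (a = 0 ∧ b = 1) ∨ (a = 1 ∧ b = 2))

/-- `H₃`: `K₅` minus the edge 0–1. -/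
def GH3 : SimpleGraph (Fin 5) :=
  (⊤ : SimpleGraph (Fin 5)) \ SimpleGraph.fromRel (fun a b => a = 0 ∧ b = 1)
/-- The family of graphs for `GR_k((k-r)K₃, rH)`: the graph `H` in each of the first
`r` colors and the triangle `K₃` in each of the remaining `k - r` colors. -/
def mixKH (k r : ℕ) (H : SimpleGraph (Fin 5)) : Fin k → Σ V : Type, SimpleGraph V :=
  fun i => if (i : ℕ) < r then ⟨Fin 5, H⟩ else ⟨Fin 3, GK3⟩


/-- edge of color `i` -/
def Ed {V K : Type} (c : V → V → K) (i : K) (u v : V) : Prop := u ≠ v ∧ c u v = i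

/-- no edge of color `i` in `A` -/
def NoEdge {V K : Type} (c : V → V → K) (A : Finset V) (i : K) : Prop :=
  ∀ x ∈ A, ∀ y ∈ A, ¬ Ed c i x y

/-- no triangle of color `i` in `A` -/
def NoTri {V K : Type} (c : V → V → K) (A : Finset V) (i : K) : Prop :=
  ∀ x ∈ A, ∀ y ∈ A, ∀ z ∈ A, Ed c i x y → Ed c i x z → Ed c i y z → False

/-- four vertices forming a clique of color `i` -/
def IsK4 {V K : Type} (c : V → V → K) (i : K) (x y z w : V) : Prop :=
  Ed c i x y ∧ Ed c i x z ∧ Ed c i x w ∧ Ed c i y z ∧ Ed c i y w ∧ Ed c i z w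

/-- no 4-clique of color `i` in `A` -/
def NoK4 {V K : Type} (c : V → V → K) (A : Finset V) (i : K) : Prop :=
  ∀ x ∈ A, ∀ y ∈ A, ∀ z ∈ A, ∀ w ∈ A, ¬ IsK4 c i x y z w

/-- no `K₄` plus a vertex adjacent to two of its vertices in color `i` in `A` -/
def NoH {V K : Type} (c : V → V → K) (A : Finset V) (i : K) : Prop :=
  ∀ x ∈ A, ∀ y ∈ A, ∀ z ∈ A, ∀ w ∈ A, ∀ e ∈ A, IsK4 c i x y z w →
    Ed c i e x → Ed c i e y → e ≠ z → e ≠ w → False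

theorem Ed.symm {V K : Type} {c : V → V → K} (hs : ∀ u v, c u v = c v u) {i : K} {u v : V}
    (h : Ed c i u v) : Ed c i v u := ⟨h.1.symm, by rw [hs]; exact h.2⟩

theorem NoEdge.mono {V K : Type} {c : V → V → K} {A B : Finset V} {i : K} (h : NoEdge c A i)
    (hB : B ⊆ A) : NoEdge c B i := fun x hx y hy => h x (hB hx) y (hB hy)

theorem NoTri.mono {V K : Type} {c : V → V → K} {A B : Finset V} {i : K} (h : NoTri c A i)
    (hB : B ⊆ A) : NoTri c B i := fun x hx y hy z hz => h x (hB hx) y (hB hy) z (hB hz)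

theorem NoK4.mono {V K : Type} {c : V → V → K} {A B : Finset V} {i : K} (h : NoK4 c A i)
    (hB : B ⊆ A) : NoK4 c B i :=
  fun x hx y hy z hz w hw => h x (hB hx) y (hB hy) z (hB hz) w (hB hw)

theorem NoH.mono {V K : Type} {c : V → V → K} {A B : Finset V} {i : K} (h : NoH c A i)
    (hB : B ⊆ A) : NoH c B i :=
  fun x hx y hy z hz w hw e he => h x (hB hx) y (hB hy) z (hB hz) w (hB hw) e (hB he)

/-- all edges in `Z` have color `i` or `j` -/
def TwoCol {V K : Type} (c : V → V → K) (Z : Finset V) (i j : K) : Prop :=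
  ∀ x ∈ Z, ∀ y ∈ Z, x ≠ y → c x y = i ∨ c x y = j

theorem TwoCol.swap {V K : Type} {c : V → V → K} {Z : Finset V} {i j : K}
    (h : TwoCol c Z i j) : TwoCol c Z j i := fun x hx y hy hxy => (h x hx y hy hxy).symm

theorem TwoCol.mono {V K : Type} {c : V → V → K} {Z Z' : Finset V} {i j : K}
    (h : TwoCol c Z i j) (hZ : Z' ⊆ Z) : TwoCol c Z' i j :=
  fun x hx y hy hxy => h x (hZ hx) y (hZ hy) hxy

open Classical in
/-- neighbours of `z` in color `i` inside `Z` -/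
noncomputable def nbr {V K : Type} (c : V → V → K) (Z : Finset V) (i : K) (z : V) : Finset V :=
  Z.filter (fun y => Ed c i z y)

theorem nbr_sub {V K : Type} (c : V → V → K) (Z : Finset V) (i : K) (z : V) :
    nbr c Z i z ⊆ Z := by
  classical
  exact Finset.filter_subset _ _

theorem mem_nbr {V K : Type} {c : V → V → K} {Z : Finset V} {i : K} {z y : V} :
    y ∈ nbr c Z i z ↔ y ∈ Z ∧ Ed c i z y := by
  classical
  simp [nbr]

theorem clique2 {V K : Type} {c : V → V → K} {Z : Finset V} {i j : K}
    (h : TwoCol c Z i j) (hi : NoEdge c Z i) (hj : NoTri c Z j) : Z.card ≤ 2 := by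
  by_contra hc
  obtain ⟨x, hx, y, hy, z, hz, hxy, hxz, hyz⟩ := Finset.two_lt_card.1 (not_le.1 hc)
  have key : ∀ u ∈ Z, ∀ v ∈ Z, u ≠ v → Ed c j u v := fun u hu v hv huv =>
    ⟨huv, (h u hu v hv huv).resolve_left (fun e => hi u hu v hv ⟨huv, e⟩)⟩
  exact hj x hx y hy z hz (key x hx y hy hxy) (key x hx z hz hxz) (key y hy z hz hyz)

theorem clique3 {V K : Type} {c : V → V → K} {Z : Finset V} {i j : K}
    (h : TwoCol c Z i j) (hi : NoEdge c Z i) (hj : NoK4 c Z j) : Z.card ≤ 3 := by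
  classical
  by_contra hc
  obtain ⟨w, hw⟩ : Z.Nonempty := Finset.card_pos.1 (by omega)
  have h2 : 2 < (Z.erase w).card := by rw [Finset.card_erase_of_mem hw]; omega
  obtain ⟨x, hx, y, hy, z, hz, hxy, hxz, hyz⟩ := Finset.two_lt_card.1 h2
  have key : ∀ u ∈ Z, ∀ v ∈ Z, u ≠ v → Ed c j u v := fun u hu v hv huv =>
    ⟨huv, (h u hu v hv huv).resolve_left (fun e => hi u hu v hv ⟨huv, e⟩)⟩
  rw [Finset.mem_erase] at hx hy hz
  exact hj w hw x hx.2 y hy.2 z hz.2 ⟨key _ hw _ hx.2 hx.1.symm, key _ hw _ hy.2 hy.1.symm,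
    key _ hw _ hz.2 hz.1.symm, key _ hx.2 _ hy.2 hxy, key _ hx.2 _ hz.2 hxz,
    key _ hy.2 _ hz.2 hyz⟩

theorem nbr_card {V K : Type} {c : V → V → K} {Z : Finset V} {i j : K} (hij : i ≠ j)
    (h : TwoCol c Z i j) {z : V} (hz : z ∈ Z) :
    Z.card = 1 + (nbr c Z i z).card + (nbr c Z j z).card := by
  classical
  have : Z = insert z (nbr c Z i z ∪ nbr c Z j z) := by
    ext y
    simp only [Finset.mem_insert, Finset.mem_union, mem_nbr, Ed]
    constructor
    · intro hy
      by_cases e : y = z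
      · exact Or.inl e
      · rcases h z hz y hy (Ne.symm e) with h1 | h1
        · exact Or.inr (Or.inl ⟨hy, Ne.symm e, h1⟩)
        · exact Or.inr (Or.inr ⟨hy, Ne.symm e, h1⟩)
    · rintro (rfl | h1 | h1)
      · exact hz
      · exact h1.1
      · exact h1.1
  have hd : Disjoint (nbr c Z i z) (nbr c Z j z) := by
    rw [Finset.disjoint_left]
    intro y hy hy'
    rw [mem_nbr] at hy hy'
    exact hij (hy.2.2.symm.trans hy'.2.2)
  have hn : z ∉ nbr c Z i z ∪ nbr c Z j z := by
    simp [mem_nbr, Ed]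
  conv_lhs => rw [this]
  rw [Finset.card_insert_of_notMem hn, Finset.card_union_of_disjoint hd]
  ring

theorem nbr_noEdge {V K : Type} {c : V → V → K} {Z : Finset V} {i : K} {z : V} (hz : z ∈ Z)
    (h : NoTri c Z i) : NoEdge c (nbr c Z i z) i := by
  intro x hx y hy e
  rw [mem_nbr] at hx hy
  exact h z hz x hx.1 y hy.1 hx.2 hy.2 e

theorem nbr_noTri {V K : Type} {c : V → V → K} {Z : Finset V} {i : K} {z : V} (hz : z ∈ Z)
    (h : NoK4 c Z i) : NoTri c (nbr c Z i z) i := by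
  intro x hx y hy w hw e1 e2 e3
  rw [mem_nbr] at hx hy hw
  exact h z hz x hx.1 y hy.1 w hw.1 ⟨hx.2, hy.2, hw.2, e1, e2, e3⟩

theorem r33 {V K : Type} {c : V → V → K} {Z : Finset V} {i j : K} (hij : i ≠ j)
    (h : TwoCol c Z i j) (hi : NoTri c Z i) (hj : NoTri c Z j) : Z.card ≤ 5 := by
  rcases Z.eq_empty_or_nonempty with rfl | ⟨z, hz⟩
  · simp
  have h1 := clique2 (h.mono (nbr_sub c Z i z)) (nbr_noEdge hz hi) (hj.mono (nbr_sub _ _ _ _))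
  have h2 := clique2 (h.swap.mono (nbr_sub c Z j z)) (nbr_noEdge hz hj)
    (hi.mono (nbr_sub _ _ _ _))
  have := nbr_card hij h hz
  omega

theorem r34 {V K : Type} {c : V → V → K} (hs : ∀ u v, c u v = c v u) {Z : Finset V} {i j : K}
    (hij : i ≠ j)
    (h : TwoCol c Z i j) (hi : NoTri c Z i) (hj : NoK4 c Z j) : Z.card ≤ 8 := by
  classical
  have key : ∀ z ∈ Z, (nbr c Z i z).card ≤ 3 ∧ Z.card ≤ 1 + (nbr c Z i z).card + 5 := by
    intro z hz
    have h1 := clique3 (h.mono (nbr_sub c Z i z)) (nbr_noEdge hz hi) (hj.mono (nbr_sub _ _ _ _))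
    have h2 := r33 hij (h.mono (nbr_sub c Z j z)) (hi.mono (nbr_sub _ _ _ _)) (nbr_noTri hz hj)
    have := nbr_card hij h hz
    omega
  by_contra hc
  obtain ⟨z₀, hz₀⟩ : Z.Nonempty := Finset.card_pos.1 (by omega)
  have h9 : Z.card = 9 := by
    have := key z₀ hz₀
    omega
  have h3 : ∀ z ∈ Z, (nbr c Z i z).card = 3 := fun z hz => by
    have := key z hz
    omega
  let G : SimpleGraph {x // x ∈ Z} :=
    { Adj := fun u v => Ed c i u.1 v.1
      symm := ⟨fun u v e => Ed.symm hs e⟩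
      loopless := ⟨fun u e => e.1 rfl⟩ }
  have hdeg : ∀ u, G.degree u = 3 := by
    intro u
    rw [← h3 u.1 u.2, ← SimpleGraph.card_neighborFinset_eq_degree]
    refine Finset.card_bij (fun v _ => v.1) ?_ ?_ ?_
    · intro v hv
      rw [SimpleGraph.mem_neighborFinset] at hv
      exact mem_nbr.2 ⟨v.2, hv⟩
    · intro a _ b _ e
      exact Subtype.ext e
    · intro y hy
      rw [mem_nbr] at hy
      exact ⟨⟨y, hy.1⟩, by rw [SimpleGraph.mem_neighborFinset]; exact hy.2, rfl⟩
  have := G.sum_degrees_eq_twice_card_edges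
  simp only [hdeg, Finset.sum_const, Finset.card_univ, Fintype.card_coe, h9, smul_eq_mul] at this
  omega

theorem r44 {V K : Type} {c : V → V → K} (hs : ∀ u v, c u v = c v u) {Z : Finset V} {i j : K}
    (hij : i ≠ j)
    (h : TwoCol c Z i j) (hi : NoK4 c Z i) (hj : NoK4 c Z j) : Z.card ≤ 17 := by
  rcases Z.eq_empty_or_nonempty with rfl | ⟨z, hz⟩
  · simp
  have h1 := r34 hs hij (h.mono (nbr_sub c Z i z)) (nbr_noTri hz hi) (hj.mono (nbr_sub _ _ _ _))
  have h2 := r34 hs hij.symm (h.swap.mono (nbr_sub c Z j z)) (nbr_noTri hz hj)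
    (hi.mono (nbr_sub _ _ _ _))
  have := nbr_card hij h hz
  omega

/-- the extremal function -/
def gg (m r : ℕ) : ℕ := (2 ^ (m % 2) * 5 ^ (m / 2)) * (4 ^ (r % 2) * 17 ^ (r / 2))

theorem gg_m2 (m r : ℕ) : gg (m + 2) r = 5 * gg m r := by
  unfold gg
  rw [show (m + 2) % 2 = m % 2 by omega, show (m + 2) / 2 = m / 2 + 1 by omega, pow_succ]
  ring

theorem gg_r2 (m r : ℕ) : gg m (r + 2) = 17 * gg m r := by
  unfold gg
  rw [show (r + 2) % 2 = r % 2 by omega, show (r + 2) / 2 = r / 2 + 1 by omega, pow_succ]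
  ring

theorem gg_cases (m r : ℕ) : ∃ W, 1 ≤ W ∧
    ((gg m r = W ∧ gg (m + 1) r = 2 * W ∧ gg m (r + 1) = 4 * W ∧ gg (m + 1) (r + 1) = 8 * W) ∨
    (gg m r = 2 * W ∧ gg (m + 1) r = 5 * W ∧ gg m (r + 1) = 8 * W ∧
      gg (m + 1) (r + 1) = 20 * W) ∨
    (gg m r = 4 * W ∧ gg (m + 1) r = 8 * W ∧ gg m (r + 1) = 17 * W ∧
      gg (m + 1) (r + 1) = 34 * W) ∨
    (gg m r = 8 * W ∧ gg (m + 1) r = 20 * W ∧ gg m (r + 1) = 34 * W ∧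
      gg (m + 1) (r + 1) = 85 * W)) := by
  refine ⟨5 ^ (m / 2) * 17 ^ (r / 2), Nat.mul_pos (by positivity) (by positivity), ?_⟩
  unfold gg
  rcases Nat.mod_two_eq_zero_or_one m with hm | hm <;>
    rcases Nat.mod_two_eq_zero_or_one r with hr | hr
  · left
    rw [hm, hr, show (m + 1) % 2 = 1 by omega, show (r + 1) % 2 = 1 by omega,
      show (m + 1) / 2 = m / 2 by omega, show (r + 1) / 2 = r / 2 by omega]
    refine ⟨?_, ?_, ?_, ?_⟩ <;> ring
  · right; right; left
    rw [hm, hr, show (m + 1) % 2 = 1 by omega, show (r + 1) % 2 = 0 by omega,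
      show (m + 1) / 2 = m / 2 by omega, show (r + 1) / 2 = r / 2 + 1 by omega]
    refine ⟨?_, ?_, ?_, ?_⟩ <;> ring
  · right; left
    rw [hm, hr, show (m + 1) % 2 = 0 by omega, show (r + 1) % 2 = 1 by omega,
      show (m + 1) / 2 = m / 2 + 1 by omega, show (r + 1) / 2 = r / 2 by omega]
    refine ⟨?_, ?_, ?_, ?_⟩ <;> ring
  · right; right; right
    rw [hm, hr, show (m + 1) % 2 = 0 by omega, show (r + 1) % 2 = 0 by omega,
      show (m + 1) / 2 = m / 2 + 1 by omega, show (r + 1) / 2 = r / 2 + 1 by omega]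
    refine ⟨?_, ?_, ?_, ?_⟩ <;> ring


/-- Gallai colorings on an arbitrary vertex type -/
def Gal {V K : Type} (c : V → V → K) : Prop :=
  ∀ u v w, u ≠ v → u ≠ w → v ≠ w → c u v = c u w ∨ c u v = c v w ∨ c u w = c v w

/-- reachability in color `i` inside `A` -/
def Rch {V K : Type} (c : V → V → K) (A : Finset V) (i : K) : V → V → Prop :=
  Relation.ReflTransGen (fun x y => x ∈ A ∧ y ∈ A ∧ Ed c i x y)

theorem Rch.symm {V K : Type} {c : V → V → K} (hs : ∀ u v, c u v = c v u) {A : Finset V} {i : K}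
    {x y : V} (h : Rch c A i x y) : Rch c A i y x := by
  unfold Rch at *
  induction h with
  | refl => exact Relation.ReflTransGen.refl
  | tail _ h2 ih => exact Relation.ReflTransGen.head ⟨h2.2.1, h2.1, h2.2.2.symm hs⟩ ih

theorem Rch.trans {V K : Type} {c : V → V → K} {A : Finset V} {i : K}
    {x y z : V} (h : Rch c A i x y) (h' : Rch c A i y z) : Rch c A i x z :=
  Relation.ReflTransGen.trans h h'

theorem Rch.mem {V K : Type} {c : V → V → K} {A : Finset V} {i : K}
    {x y : V} (h : Rch c A i x y) (hx : x ∈ A) : y ∈ A := by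
  unfold Rch at *
  induction h with
  | refl => exact hx
  | tail _ h2 _ => exact h2.2.1

theorem Rch.step {V K : Type} {c : V → V → K} {A : Finset V} {i : K}
    {x y z : V} (h : Rch c A i x y) (hy : y ∈ A) (hz : z ∈ A) (e : Ed c i y z) :
    Rch c A i x z :=
  Relation.ReflTransGen.tail h ⟨hy, hz, e⟩

theorem not_rch_of_closed {V K : Type} {c : V → V → K} {A : Finset V} {i : K}
    (X : V → Prop) (hX : ∀ x ∈ A, X x → ∀ y ∈ A, ¬ X y → ¬ Ed c i x y) {u v : V}
    (hu : X u) (hv : ¬ X v) : ¬ Rch c A i u v := by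
  intro h
  apply hv
  unfold Rch at h
  clear hv
  induction h with
  | refl => exact hu
  | tail _ h2 ih =>
    by_contra hc
    exact hX _ h2.1 ih _ h2.2.1 hc h2.2.2

theorem rch_hom {V K : Type} {c : V → V → K} (hs : ∀ u v, c u v = c v u) (hG : Gal c)
    {A : Finset V} {i : K} {u u' w : V} (h : Rch c A i u u') (hw : w ∈ A)
    (hn : ¬ Rch c A i u w) : c w u = c w u' := by
  unfold Rch at h
  induction h with
  | refl => rfl
  | @tail x y h1 h2 ih =>
    rw [ih]
    have h1' : Rch c A i u x := h1
    have h3 : Rch c A i u y := h1'.step h2.1 h2.2.1 h2.2.2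
    have hwx : w ≠ x := fun e => hn (e ▸ h1')
    have hwy : w ≠ y := fun e => hn (e ▸ h3)
    have a1 : c w x ≠ i := fun e => hn (h1'.step h2.1 hw ⟨hwx.symm, by rw [hs]; exact e⟩)
    have a2 : c w y ≠ i := fun e => hn (h3.step h2.2.1 hw ⟨hwy.symm, by rw [hs]; exact e⟩)
    rcases hG w x y hwx hwy h2.2.2.1 with e | e | e
    · exact e
    · exact absurd (e.trans h2.2.2.2) a1
    · exact absurd (e.trans h2.2.2.2) a2

theorem exists_disc {V K : Type} {c : V → V → K} (hs : ∀ u v, c u v = c v u) (hG : Gal c)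
    {a b d : K} (hab : a ≠ b) (had : a ≠ d) (hbd : b ≠ d) (A : Finset V) :
    2 ≤ A.card → ∃ i, (i = a ∨ i = b ∨ i = d) ∧ ∃ x ∈ A, ∃ y ∈ A, ¬ Rch c A i x y := by
  classical
  induction A using Finset.induction_on with
  | empty => intro h; simp at h
  | insert v B hv ih =>
    intro hcard
    rw [Finset.card_insert_of_notMem hv] at hcard
    -- a helper: avoiding two colors
    have avoid : ∀ p q : K, ∃ i, (i = a ∨ i = b ∨ i = d) ∧ i ≠ p ∧ i ≠ q := by
      intro p q
      by_cases h1 : a ≠ p ∧ a ≠ q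
      · exact ⟨a, by tauto, h1⟩
      by_cases h2 : b ≠ p ∧ b ≠ q
      · exact ⟨b, by tauto, h2⟩
      refine ⟨d, by tauto, ?_⟩
      grind
    by_cases hB : 2 ≤ B.card
    · obtain ⟨i, hi, x, hx, y, hy, hxy⟩ := ih hB
      by_cases hall : ∀ u ∈ B, c v u = i
      · obtain ⟨q, hq, hqi, -⟩ := avoid i i
        refine ⟨q, hq, v, Finset.mem_insert_self _ _, x, Finset.mem_insert_of_mem hx, ?_⟩
        apply not_rch_of_closed (fun z => z = v) _ rfl (fun e => hv (e ▸ hx))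
        rintro z hz rfl w hw hwv e
        rw [Finset.mem_insert] at hw
        exact hqi ((e.2.symm).trans (hall w (hw.resolve_left hwv)))
      push Not at hall
      obtain ⟨u, hu, hui⟩ := hall
      by_cases hcl : ∃ z ∈ B, ∀ w ∈ B, Rch c B i z w → c v w ≠ i
      · -- a component missing `v`
        obtain ⟨z, hz, hzc⟩ := hcl
        refine ⟨i, hi, z, Finset.mem_insert_of_mem hz, v, Finset.mem_insert_self _ _, ?_⟩
        apply not_rch_of_closed (fun w => w ∈ B ∧ Rch c B i z w) _
          ⟨hz, Relation.ReflTransGen.refl⟩ (fun e => hv e.1)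
        rintro w hw ⟨hwB, hzw⟩ t ht hnt e
        rw [Finset.mem_insert] at ht
        rcases ht with rfl | ht
        · exact hzc w hwB hzw (by rw [hs]; exact e.2)
        · exact hnt ⟨ht, hzw.step hwB ht e⟩
      push Not at hcl
      -- some vertex outside the component of u
      have hout : ∃ w ∈ B, ¬ Rch c B i u w := by
        by_contra hcon
        push Not at hcon
        exact hxy (((hcon x hx).symm hs).trans (hcon y hy))
      have key : ∀ u' ∈ B, c v u' ≠ i → ∀ w ∈ B, ¬ Rch c B i u' w → c u' w = c v u' := by
        intro u' hu' hui' w hw hnw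
        obtain ⟨w', hw', hww', hvw'⟩ := hcl w hw
        have hn' : ¬ Rch c B i u' w' := fun e => hnw (e.trans (hww'.symm hs))
        have hne : u' ≠ w' := fun e => hn' (e ▸ Relation.ReflTransGen.refl)
        have e1 : c u' w = c u' w' :=
          rch_hom hs hG hww' hu' (fun e => hnw (e.symm hs))
        rw [e1]
        have hne1 : c u' w' ≠ i := fun e =>
          hn' (Rch.step (x := u') Relation.ReflTransGen.refl hu' hw' ⟨hne, e⟩)
        rcases hG v u' w' (fun e => hv (e ▸ hu')) (fun e => hv (e ▸ hw')) hne with e | e | e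
        · exact absurd (e.trans hvw') hui'
        · exact e.symm
        · exact absurd (e.symm.trans hvw') hne1
      obtain ⟨q, hq, hqi, hqp⟩ := avoid i (c v u)
      refine ⟨q, hq, u, Finset.mem_insert_of_mem hu, v, Finset.mem_insert_self _ _, ?_⟩
      apply not_rch_of_closed (fun w => w ∈ B ∧ Rch c B i u w) _
          ⟨hu, Relation.ReflTransGen.refl⟩ (fun e => hv e.1)
      have hcol : ∀ u' ∈ B, Rch c B i u u' → ∀ w ∈ B, ¬ Rch c B i u w → c u' w = c v u := by
        intro u' hu' huu' w hw hnw
        have e1 := rch_hom hs hG huu' hw hnw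
        rw [hs, ← e1, hs, key u hu hui w hw hnw]
      rintro w hw ⟨hwB, huw⟩ t ht hnt e
      rw [Finset.mem_insert] at ht
      rcases ht with rfl | ht
      · obtain ⟨w0, hw0, hnw0⟩ := hout
        by_cases hti : c t w = i
        · exact hqi (by rw [← e.2, hs, hti])
        · have e2 := key w hwB hti w0 hw0 (fun e => hnw0 (huw.trans e))
          rw [hcol w hwB huw w0 hw0 hnw0] at e2
          exact hqp (by rw [e2, ← e.2, hs])
      · exact hqp (by rw [← e.2]; exact hcol w hwB huw t ht (fun e => hnt ⟨ht, e⟩))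
    · have h1 : B.card = 1 := by omega
      obtain ⟨u, rfl⟩ := Finset.card_eq_one.1 h1
      obtain ⟨q, hq, hqi, -⟩ := avoid (c v u) (c v u)
      have hvu : v ≠ u := by simpa using hv
      refine ⟨q, hq, v, by simp, u, by simp, ?_⟩
      apply not_rch_of_closed (fun z => z = v) _ rfl hvu.symm
      rintro z hz rfl w hw hwv e
      have : w = u := by simpa [hwv] using hw
      subst this
      exact hqi e.2.symm

/-- a two-colored homogeneous partition given by a retraction `p` -/
structure Par {V K : Type} (c : V → V → K) (A : Finset V) (p : V → V) (i j : K) : Prop where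
  mem : ∀ x ∈ A, p x ∈ A
  idem : ∀ x ∈ A, p (p x) = p x
  hom : ∀ x ∈ A, ∀ y ∈ A, p x ≠ p y → c x y = c (p x) (p y)
  two : ∀ x ∈ A, ∀ y ∈ A, p x ≠ p y → c x y = i ∨ c x y = j

theorem gallai_par {V K : Type} {c : V → V → K} (hs : ∀ u v, c u v = c v u) (hG : Gal c) :
    ∀ n, ∀ A : Finset V, A.card = n → 2 ≤ A.card →
      ∃ p i j, Par c A p i j ∧ ∃ x ∈ A, ∃ y ∈ A, p x ≠ p y := by
  classical
  intro n
  induction n using Nat.strong_induction_on with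
  | _ n ih =>
  intro A hn hA
  obtain ⟨x0, hx0, y0, hy0, hxy0⟩ := Finset.one_lt_card.1 hA
  have small : ∀ i j, TwoCol c A i j → ∃ p i j, Par c A p i j ∧ ∃ x ∈ A, ∃ y ∈ A, p x ≠ p y := by
    intro i j h
    exact ⟨id, i, j, ⟨fun x hx => hx, fun x _ => rfl, fun x _ y _ _ => rfl,
      fun x hx y hy hxy => h x hx y hy hxy⟩, x0, hx0, y0, hy0, hxy0⟩
  by_cases h1 : TwoCol c A (c x0 y0) (c x0 y0)
  · exact small _ _ h1
  unfold TwoCol at h1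
  push Not at h1
  obtain ⟨x1, hx1, y1, hy1, hxy1, h1, -⟩ := h1
  by_cases h2 : TwoCol c A (c x0 y0) (c x1 y1)
  · exact small _ _ h2
  unfold TwoCol at h2
  push Not at h2
  obtain ⟨x2, hx2, y2, hy2, hxy2, h2, h2'⟩ := h2
  obtain ⟨l, hl, s, hsA, t, htA, hst⟩ := exists_disc hs hG h1.symm h2.symm h2'.symm A hA
  have hedge : ∃ x ∈ A, ∃ y ∈ A, Ed c l x y := by
    rcases hl with rfl | rfl | rfl
    · exact ⟨x0, hx0, y0, hy0, hxy0, rfl⟩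
    · exact ⟨x1, hx1, y1, hy1, hxy1, rfl⟩
    · exact ⟨x2, hx2, y2, hy2, hxy2, rfl⟩
  let S : Setoid V := ⟨Rch c A l, ⟨fun _ => Relation.ReflTransGen.refl, fun h => h.symm hs,
    fun h h' => h.trans h'⟩⟩
  let q : V → V := fun x => (Quotient.mk S x).out
  have hq1 : ∀ x, Rch c A l x (q x) := fun x => (Quotient.mk_out (s := S) x).symm hs
  have hq2 : ∀ x y, Rch c A l x y → q x = q y := fun x y h => by
    have : Quotient.mk S x = Quotient.mk S y := Quotient.sound h
    simp only [q, this]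
  have hq3 : ∀ x y, q x = q y → Rch c A l x y := fun x y h =>
    (hq1 x).trans (h ▸ (hq1 y).symm hs)
  have hqA : ∀ x ∈ A, q x ∈ A := fun x hx => (hq1 x).mem hx
  have hqq : ∀ x, q (q x) = q x := fun x => (hq2 _ _ (hq1 x)).symm
  have hqh : ∀ x ∈ A, ∀ y ∈ A, q x ≠ q y → c x y = c (q x) (q y) := by
    intro x hx y hy hxy
    have n1 : ¬ Rch c A l x y := fun e => hxy (hq2 _ _ e)
    have n2 : ¬ Rch c A l y (q x) := fun e => n1 ((hq1 x).trans (e.symm hs))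
    rw [hs x y, rch_hom hs hG (hq1 x) hy n1, hs, rch_hom hs hG (hq1 y) (hqA x hx) n2]
  have hsub : A.image q ⊆ A := by
    intro x hx
    obtain ⟨y, hy, rfl⟩ := Finset.mem_image.1 hx
    exact hqA y hy
  have hlt : (A.image q).card < A.card := by
    refine lt_of_le_of_ne Finset.card_image_le ?_
    intro e
    have hinj := Finset.card_image_iff.1 e
    obtain ⟨x, hx, y, hy, hxy⟩ := hedge
    exact hxy.1 (hinj hx hy (hq2 _ _
      (Rch.step (x := x) Relation.ReflTransGen.refl hx hy hxy)))
  have h2c : 2 ≤ (A.image q).card :=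
    Finset.one_lt_card.2 ⟨q s, Finset.mem_image_of_mem _ hsA, q t, Finset.mem_image_of_mem _ htA,
      fun e => hst (hq3 _ _ e)⟩
  obtain ⟨p, i, j, hp, x, hx, y, hy, hxy⟩ := ih _ (hn ▸ hlt) (A.image q) rfl h2c
  have hm : ∀ x ∈ A, q x ∈ A.image q := fun x hx => Finset.mem_image_of_mem _ hx
  have hid : ∀ x ∈ A.image q, q x = x := by
    intro x hx
    obtain ⟨y, hy, rfl⟩ := Finset.mem_image.1 hx
    exact hqq y
  refine ⟨fun x => p (q x), i, j, ⟨?_, ?_, ?_, ?_⟩, x, hsub hx, y, hsub hy, ?_⟩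
  · intro x hx
    exact hsub (hp.mem _ (hm x hx))
  · intro x hx
    show p (q (p (q x))) = p (q x)
    rw [hid _ (hp.mem _ (hm x hx)), hp.idem _ (hm x hx)]
  · intro x hx y hy hxy
    rw [hqh x hx y hy (fun e => hxy (by simp only [e])), hp.hom _ (hm x hx) _ (hm y hy) hxy]
  · intro x hx y hy hxy
    rw [hqh x hx y hy (fun e => hxy (by simp only [e]))]
    exact hp.two _ (hm x hx) _ (hm y hy) hxy
  · show p (q x) ≠ p (q y)
    rw [hid x hx, hid y hy]
    exact hxy


/-- admissible set: colors in `M` avoid triangles, colors in `R` avoid `H₂` -/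
structure Ok {V K : Type} [DecidableEq K] (c : V → V → K) (A : Finset V) (M R : Finset K) :
    Prop where
  disj : Disjoint M R
  col : ∀ x ∈ A, ∀ y ∈ A, x ≠ y → c x y ∈ M ∨ c x y ∈ R
  tri : ∀ i ∈ M, NoTri c A i
  noH : ∀ i ∈ R, NoH c A i

/-- induction hypothesis -/
def IHyp {V K : Type} [DecidableEq K] (c : V → V → K) (M R : Finset K) : Prop :=
  ∀ (M' R' : Finset K) (B : Finset V), M'.card + 2 * R'.card < M.card + 2 * R.card →
    Ok c B M' R' → B.card ≤ gg M'.card R'.card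

section
variable {V K : Type} [DecidableEq K] {c : V → V → K} {A B : Finset V} {M R : Finset K} {i j : K}

theorem Ok.mono (h : Ok c A M R) (hB : B ⊆ A) : Ok c B M R :=
  ⟨h.disj, fun x hx y hy => h.col x (hB hx) y (hB hy), fun i hi => (h.tri i hi).mono hB,
    fun i hi => (h.noH i hi).mono hB⟩

theorem Ok.dropM (h : Ok c A M R) (hn : NoEdge c A i) : Ok c A (M.erase i) R := by
  refine ⟨h.disj.mono_left (Finset.erase_subset _ _), ?_, ?_, h.noH⟩
  · intro x hx y hy hxy
    rcases h.col x hx y hy hxy with e | e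
    · exact Or.inl (Finset.mem_erase.2 ⟨fun e' => hn x hx y hy ⟨hxy, e'⟩, e⟩)
    · exact Or.inr e
  · intro i hi
    exact h.tri i (Finset.mem_of_mem_erase hi)

theorem Ok.dropR (h : Ok c A M R) (hn : NoEdge c A i) : Ok c A M (R.erase i) := by
  refine ⟨h.disj.mono_right (Finset.erase_subset _ _), ?_, h.tri, ?_⟩
  · intro x hx y hy hxy
    rcases h.col x hx y hy hxy with e | e
    · exact Or.inl e
    · exact Or.inr (Finset.mem_erase.2 ⟨fun e' => hn x hx y hy ⟨hxy, e'⟩, e⟩)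
  · intro i hi
    exact h.noH i (Finset.mem_of_mem_erase hi)

theorem Ok.demote (h : Ok c A M R) (hn : NoTri c A i) : Ok c A (insert i M) (R.erase i) := by
  refine ⟨?_, ?_, ?_, ?_⟩
  · rw [Finset.disjoint_left]
    intro x hx hx'
    rw [Finset.mem_erase] at hx'
    exact Finset.disjoint_left.1 h.disj ((Finset.mem_insert.1 hx).resolve_left hx'.1) hx'.2
  · intro x hx y hy hxy
    by_cases e' : c x y = i
    · left; rw [e']; exact Finset.mem_insert_self _ _
    rcases h.col x hx y hy hxy with e | e
    · exact Or.inl (Finset.mem_insert_of_mem e)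
    · exact Or.inr (Finset.mem_erase.2 ⟨e', e⟩)
  · intro l hl
    rcases Finset.mem_insert.1 hl with rfl | hl
    · exact hn
    · exact h.tri l hl
  · intro i hi
    exact h.noH i (Finset.mem_of_mem_erase hi)

theorem Ok.notM (h : Ok c A M R) (hi : i ∈ R) : i ∉ M :=
  fun e => Finset.disjoint_left.1 h.disj e hi

theorem bM (hI : IHyp c M R) (hA : Ok c A M R) (hB : B ⊆ A) (hi : i ∈ M)
    (h : NoEdge c B i) : B.card ≤ gg (M.card - 1) R.card := by
  have hp := Finset.card_pos.2 ⟨i, hi⟩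
  have := hI _ _ B (by rw [Finset.card_erase_of_mem hi]; omega) ((hA.mono hB).dropM h)
  rwa [Finset.card_erase_of_mem hi] at this

theorem bR0 (hI : IHyp c M R) (hA : Ok c A M R) (hB : B ⊆ A) (hi : i ∈ R)
    (h : NoEdge c B i) : B.card ≤ gg M.card (R.card - 1) := by
  have hp := Finset.card_pos.2 ⟨i, hi⟩
  have := hI _ _ B (by rw [Finset.card_erase_of_mem hi]; omega) ((hA.mono hB).dropR h)
  rwa [Finset.card_erase_of_mem hi] at this

theorem bR1 (hI : IHyp c M R) (hA : Ok c A M R) (hB : B ⊆ A) (hi : i ∈ R)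
    (h : NoTri c B i) : B.card ≤ gg (M.card + 1) (R.card - 1) := by
  have hp := Finset.card_pos.2 ⟨i, hi⟩
  have hn := hA.notM hi
  have := hI _ _ B (by
    rw [Finset.card_erase_of_mem hi, Finset.card_insert_of_notMem hn]; omega)
    ((hA.mono hB).demote h)
  rwa [Finset.card_erase_of_mem hi, Finset.card_insert_of_notMem hn] at this

/-- weakening of the induction hypothesis -/
theorem IHyp.lt {M' R' : Finset K} (hI : IHyp c M R)
    (h : M'.card + 2 * R'.card ≤ M.card + 2 * R.card) : IHyp c M' R' :=
  fun M'' R'' B h' => hI M'' R'' B (by omega)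

theorem bMM (hI : IHyp c M R) (hA : Ok c A M R) (hB : B ⊆ A) (hij : i ≠ j) (hi : i ∈ M)
    (hj : j ∈ M) (h : NoEdge c B i) (h' : NoEdge c B j) :
    B.card ≤ gg (M.card - 2) R.card := by
  have hp := Finset.card_pos.2 ⟨i, hi⟩
  have := bM (hI.lt (M' := M.erase i) (R' := R)
    (by rw [Finset.card_erase_of_mem hi]; omega)) ((hA.mono hB).dropM h) (subset_refl B)
    (Finset.mem_erase.2 ⟨hij.symm, hj⟩) h'
  rwa [Finset.card_erase_of_mem hi, Nat.sub_sub] at this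

theorem bMR0 (hI : IHyp c M R) (hA : Ok c A M R) (hB : B ⊆ A) (hi : i ∈ M)
    (hj : j ∈ R) (h : NoEdge c B i) (h' : NoEdge c B j) :
    B.card ≤ gg (M.card - 1) (R.card - 1) := by
  have hp := Finset.card_pos.2 ⟨i, hi⟩
  have := bR0 (hI.lt (M' := M.erase i) (R' := R)
    (by rw [Finset.card_erase_of_mem hi]; omega)) ((hA.mono hB).dropM h) (subset_refl B)
    hj h'
  rwa [Finset.card_erase_of_mem hi] at this

theorem bMR1 (hI : IHyp c M R) (hA : Ok c A M R) (hB : B ⊆ A) (hi : i ∈ M)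
    (hj : j ∈ R) (h : NoEdge c B i) (h' : NoTri c B j) :
    B.card ≤ gg M.card (R.card - 1) := by
  have hp := Finset.card_pos.2 ⟨i, hi⟩
  have := bR1 (hI.lt (M' := M.erase i) (R' := R)
    (by rw [Finset.card_erase_of_mem hi]; omega)) ((hA.mono hB).dropM h) (subset_refl B)
    hj h'
  rwa [Finset.card_erase_of_mem hi, Nat.sub_add_cancel hp] at this

theorem bRR00 (hI : IHyp c M R) (hA : Ok c A M R) (hB : B ⊆ A) (hij : i ≠ j) (hi : i ∈ R)
    (hj : j ∈ R) (h : NoEdge c B i) (h' : NoEdge c B j) :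
    B.card ≤ gg M.card (R.card - 2) := by
  have hp := Finset.card_pos.2 ⟨i, hi⟩
  have := bR0 (hI.lt (M' := M) (R' := R.erase i)
    (by rw [Finset.card_erase_of_mem hi]; omega)) ((hA.mono hB).dropR h) (subset_refl B)
    (Finset.mem_erase.2 ⟨hij.symm, hj⟩) h'
  rwa [Finset.card_erase_of_mem hi, Nat.sub_sub] at this

theorem bRR01 (hI : IHyp c M R) (hA : Ok c A M R) (hB : B ⊆ A) (hij : i ≠ j) (hi : i ∈ R)
    (hj : j ∈ R) (h : NoEdge c B i) (h' : NoTri c B j) :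
    B.card ≤ gg (M.card + 1) (R.card - 2) := by
  have hp := Finset.card_pos.2 ⟨i, hi⟩
  have := bR1 (hI.lt (M' := M) (R' := R.erase i)
    (by rw [Finset.card_erase_of_mem hi]; omega)) ((hA.mono hB).dropR h) (subset_refl B)
    (Finset.mem_erase.2 ⟨hij.symm, hj⟩) h'
  rwa [Finset.card_erase_of_mem hi, Nat.sub_sub] at this

theorem bRR11 (hI : IHyp c M R) (hA : Ok c A M R) (hB : B ⊆ A) (hij : i ≠ j) (hi : i ∈ R)
    (hj : j ∈ R) (h : NoTri c B i) (h' : NoTri c B j) :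
    B.card ≤ gg (M.card + 2) (R.card - 2) := by
  have hp := Finset.card_pos.2 ⟨i, hi⟩
  have hn := hA.notM hi
  have := bR1 (hI.lt (M' := insert i M) (R' := R.erase i)
    (by rw [Finset.card_erase_of_mem hi, Finset.card_insert_of_notMem hn]; omega))
    ((hA.mono hB).demote h) (subset_refl B)
    (Finset.mem_erase.2 ⟨hij.symm, hj⟩) h'
  rwa [Finset.card_erase_of_mem hi, Finset.card_insert_of_notMem hn, Nat.sub_sub] at this

end

/-- all edges between `X` and `Y` have color `i` -/
def Join {V K : Type} (c : V → V → K) (i : K) (X Y : Finset V) : Prop :=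
  ∀ x ∈ X, ∀ y ∈ Y, Ed c i x y

section
variable {V K : Type} {c : V → V → K} {A X Y : Finset V} {i j : K}

theorem Join.symm (hs : ∀ u v, c u v = c v u) (h : Join c i X Y) : Join c i Y X :=
  fun x hx y hy => (h y hy x hx).symm hs

theorem Join.noEdge_of_noTri (h : Join c i X Y) (hX : X ⊆ A) (hY : Y ⊆ A) (hn : NoTri c A i)
    (hy : Y.Nonempty) : NoEdge c X i := by
  obtain ⟨y, hy⟩ := hy
  intro a ha b hb e
  exact hn a (hX ha) b (hX hb) y (hY hy) e (h a ha y hy) (h b hb y hy)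

theorem Join.noTri_of_noK4 (h : Join c i X Y) (hX : X ⊆ A) (hY : Y ⊆ A) (hn : NoK4 c A i)
    (hy : Y.Nonempty) : NoTri c X i := by
  obtain ⟨y, hy⟩ := hy
  intro a ha b hb d hd e1 e2 e3
  exact hn a (hX ha) b (hX hb) d (hX hd) y (hY hy)
    ⟨e1, e2, h a ha y hy, e3, h b hb y hy, h d hd y hy⟩

theorem Join.noEdge_of_noK4 (h : Join c i X Y) (hX : X ⊆ A) (hY : Y ⊆ A) (hn : NoK4 c A i)
    (hy : ¬ NoEdge c Y i) : NoEdge c X i := by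
  intro a ha b hb e
  apply hy
  intro x hx y hy e'
  exact hn a (hX ha) b (hX hb) x (hY hx) y (hY hy)
    ⟨e, h a ha x hx, h a ha y hy, h b hb x hx, h b hb y hy, e'⟩

theorem Join.noTri_of_noH (hs : ∀ u v, c u v = c v u) (h : Join c i X Y) (hX : X ⊆ A)
    (hY : Y ⊆ A) (hn : NoH c A i)
    (hy : 2 ≤ Y.card) : NoTri c X i := by
  obtain ⟨y, hy, y', hy', hyy⟩ := Finset.one_lt_card.1 hy
  intro a ha b hb d hd e1 e2 e3
  exact hn a (hX ha) b (hX hb) d (hX hd) y (hY hy) y' (hY hy')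
    ⟨e1, e2, h a ha y hy, e3, h b hb y hy, h d hd y hy⟩
    ((h a ha y' hy').symm hs) ((h b hb y' hy').symm hs) (h d hd y' hy').1.symm hyy.symm

theorem Join.noEdge_of_noH (hs : ∀ u v, c u v = c v u) (h : Join c i X Y) (hX : X ⊆ A)
    (hY : Y ⊆ A) (hn : NoH c A i)
    (hx : 3 ≤ X.card) : NoEdge c X i ∨ NoEdge c Y i := by
  classical
  by_contra hcon
  rw [not_or] at hcon
  obtain ⟨h1, h2⟩ := hcon
  unfold NoEdge at h1 h2
  push Not at h1 h2
  obtain ⟨a, ha, b, hb, e⟩ := h1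
  obtain ⟨x, hx', y, hy, e'⟩ := h2
  obtain ⟨d, hd, hda, hdb⟩ : ∃ d ∈ X, d ≠ a ∧ d ≠ b := by
    by_contra hc
    push Not at hc
    have : X ⊆ {a, b} := by
      intro z hz
      rw [Finset.mem_insert, Finset.mem_singleton]
      by_cases hza : z = a
      · exact Or.inl hza
      · exact Or.inr (hc z hz hza)
    have := (Finset.card_le_card this).trans Finset.card_le_two
    omega
  exact hn x (hY hx') y (hY hy) a (hX ha) b (hX hb) d (hX hd)
    ⟨e', (h a ha x hx').symm hs, (h b hb x hx').symm hs, (h a ha y hy).symm hs,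
      (h b hb y hy).symm hs, e⟩ (h d hd x hx') (h d hd y hy) hda hdb

theorem del_tri (hs : ∀ u v, c u v = c v u) : ∀ n, ∀ X : Finset V, X.card = n →
    (∀ x ∈ X, ∀ y ∈ X, ∀ z ∈ X, ∀ w ∈ X, Ed c i x y → Ed c i x z → Ed c i y z → Ed c i w x →
      w ≠ y → w ≠ z → False) → ∃ D ⊆ X, 2 * X.card ≤ 3 * D.card ∧ NoTri c D i := by
  classical
  intro n
  induction n using Nat.strong_induction_on with
  | _ n ih =>
  intro X hn hX
  by_cases ht : NoTri c X i
  · exact ⟨X, subset_refl _, by omega, ht⟩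
  unfold NoTri at ht
  push Not at ht
  obtain ⟨x, hx, y, hy, z, hz, e1, e2, e3, -⟩ := ht
  have hT : ({x, y, z} : Finset V) ⊆ X := by
    intro w hw
    simp only [Finset.mem_insert, Finset.mem_singleton] at hw
    rcases hw with rfl | rfl | rfl <;> assumption
  have hTc : ({x, y, z} : Finset V).card = 3 :=
    Finset.card_eq_three.2 ⟨x, y, z, e1.1, e2.1, e3.1, rfl⟩
  have hc := Finset.card_sdiff_add_card_eq_card hT
  obtain ⟨D, hD, hDc, hDt⟩ := ih _ (by rw [← hn]; omega) (X \ {x, y, z}) rfl (by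
    intro a ha b hb d hd w hw
    exact hX a (Finset.sdiff_subset ha) b (Finset.sdiff_subset hb) d (Finset.sdiff_subset hd)
      w (Finset.sdiff_subset hw))
  have hDX : ∀ w ∈ D, w ∈ X ∧ w ≠ x ∧ w ≠ y ∧ w ≠ z := by
    intro w hw
    have := hD hw
    simpa [Finset.mem_sdiff] using this
  have nx : ∀ w ∈ D, ¬ Ed c i w x := fun w hw e =>
    hX x hx y hy z hz w (hDX w hw).1 e1 e2 e3 e (hDX w hw).2.2.1 (hDX w hw).2.2.2
  have ny : ∀ w ∈ D, ¬ Ed c i w y := fun w hw e =>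
    hX y hy x hx z hz w (hDX w hw).1 (e1.symm hs) e3 e2 e (hDX w hw).2.1 (hDX w hw).2.2.2
  have hyD : y ∉ D := fun h => (hDX y h).2.2.1 rfl
  have hxD : x ∉ insert y D := by
    rw [Finset.mem_insert, not_or]
    exact ⟨e1.1, fun h => (hDX x h).2.1 rfl⟩
  refine ⟨insert x (insert y D), ?_, ?_, ?_⟩
  · intro w hw
    simp only [Finset.mem_insert] at hw
    rcases hw with rfl | rfl | hw
    · exact hx
    · exact hy
    · exact (hDX w hw).1
  · rw [Finset.card_insert_of_notMem hxD, Finset.card_insert_of_notMem hyD]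
    omega
  · have nx' : ∀ w ∈ D, ¬ Ed c i x w := fun w hw e => nx w hw (e.symm hs)
    have ny' : ∀ w ∈ D, ¬ Ed c i y w := fun w hw e => ny w hw (e.symm hs)
    intro a ha b hb d hd f1 f2 f3
    simp only [Finset.mem_insert] at ha hb hd
    have g1 := f1.1
    have g2 := f2.1
    have g3 := f3.1
    rcases ha with rfl | rfl | ha <;> rcases hb with rfl | rfl | hb <;>
      rcases hd with rfl | rfl | hd <;> first
        | exact absurd rfl g1
        | exact absurd rfl g2
        | exact absurd rfl g3
        | exact nx _ (by assumption) (by assumption)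
        | exact ny _ (by assumption) (by assumption)
        | exact nx' _ (by assumption) (by assumption)
        | exact ny' _ (by assumption) (by assumption)
        | exact hDt a ha b hb d hd f1 f2 f3

theorem Join.del (hs : ∀ u v, c u v = c v u) (h : Join c i X Y) (hX : X ⊆ A)
    (hY : Y ⊆ A) (hn : NoH c A i) (hy : Y.Nonempty) :
    ∃ D ⊆ X, 2 * X.card ≤ 3 * D.card ∧ NoTri c D i := by
  obtain ⟨v, hv⟩ := hy
  apply del_tri hs _ X rfl
  intro x hx y hy z hz w hw e1 e2 e3 e4 hwy hwz
  exact hn x (hX hx) v (hY hv) y (hX hy) z (hX hz) w (hX hw)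
    ⟨h x hx v hv, e1, e2, (h y hy v hv).symm hs, (h z hz v hv).symm hs, e3⟩
    e4 (h w hw v hv) hwy hwz
end


theorem ar_M {m : ℕ} (r : ℕ) (hm : 1 ≤ m) : 2 * gg (m - 1) r ≤ gg m r := by
  obtain ⟨m, rfl⟩ := Nat.exists_eq_add_of_le' hm
  obtain ⟨W, hW, h⟩ := gg_cases m r
  simp only [Nat.add_sub_cancel]
  omega

theorem ar_MM {m : ℕ} (r : ℕ) (hm : 2 ≤ m) : gg m r = 5 * gg (m - 2) r := by
  obtain ⟨m, rfl⟩ := Nat.exists_eq_add_of_le' hm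
  simp only [Nat.add_sub_cancel]
  exact gg_m2 m r

theorem ar_R (m : ℕ) {r : ℕ} (hr : 1 ≤ r) : ∃ W, 1 ≤ W ∧
    ((gg m (r - 1) = W ∧ gg (m + 1) (r - 1) = 2 * W ∧ gg m r = 4 * W) ∨
    (gg m (r - 1) = 2 * W ∧ gg (m + 1) (r - 1) = 5 * W ∧ gg m r = 8 * W) ∨
    (gg m (r - 1) = 4 * W ∧ gg (m + 1) (r - 1) = 8 * W ∧ gg m r = 17 * W) ∨
    (gg m (r - 1) = 8 * W ∧ gg (m + 1) (r - 1) = 20 * W ∧ gg m r = 34 * W)) := by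
  obtain ⟨r, rfl⟩ := Nat.exists_eq_add_of_le' hr
  obtain ⟨W, hW, h⟩ := gg_cases m r
  simp only [Nat.add_sub_cancel]
  exact ⟨W, hW, by omega⟩

theorem ar_MR {m r : ℕ} (hm : 1 ≤ m) (hr : 1 ≤ r) : ∃ W, 1 ≤ W ∧
    ((gg (m - 1) (r - 1) = W ∧ gg m (r - 1) = 2 * W ∧ gg (m - 1) r = 4 * W ∧ gg m r = 8 * W) ∨
    (gg (m - 1) (r - 1) = 2 * W ∧ gg m (r - 1) = 5 * W ∧ gg (m - 1) r = 8 * W ∧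
      gg m r = 20 * W) ∨
    (gg (m - 1) (r - 1) = 4 * W ∧ gg m (r - 1) = 8 * W ∧ gg (m - 1) r = 17 * W ∧
      gg m r = 34 * W) ∨
    (gg (m - 1) (r - 1) = 8 * W ∧ gg m (r - 1) = 20 * W ∧ gg (m - 1) r = 34 * W ∧
      gg m r = 85 * W)) := by
  obtain ⟨r, rfl⟩ := Nat.exists_eq_add_of_le' hr
  obtain ⟨m, rfl⟩ := Nat.exists_eq_add_of_le' hm
  simp only [Nat.add_sub_cancel]
  exact gg_cases m r

theorem ar_RR (m : ℕ) {r : ℕ} (hr : 2 ≤ r) : ∃ W, 1 ≤ W ∧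
    ((gg m (r - 2) = W ∧ gg (m + 1) (r - 2) = 2 * W ∧ gg (m + 2) (r - 2) = 5 * W ∧
      gg m (r - 1) = 4 * W ∧ gg (m + 1) (r - 1) = 8 * W ∧ gg m r = 17 * W) ∨
    (gg m (r - 2) = 2 * W ∧ gg (m + 1) (r - 2) = 5 * W ∧ gg (m + 2) (r - 2) = 10 * W ∧
      gg m (r - 1) = 8 * W ∧ gg (m + 1) (r - 1) = 20 * W ∧ gg m r = 34 * W) ∨
    (gg m (r - 2) = 4 * W ∧ gg (m + 1) (r - 2) = 8 * W ∧ gg (m + 2) (r - 2) = 20 * W ∧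
      gg m (r - 1) = 17 * W ∧ gg (m + 1) (r - 1) = 34 * W ∧ gg m r = 68 * W) ∨
    (gg m (r - 2) = 8 * W ∧ gg (m + 1) (r - 2) = 20 * W ∧ gg (m + 2) (r - 2) = 40 * W ∧
      gg m (r - 1) = 34 * W ∧ gg (m + 1) (r - 1) = 85 * W ∧ gg m r = 136 * W)) := by
  obtain ⟨r, rfl⟩ := Nat.exists_eq_add_of_le' hr
  obtain ⟨W, hW, h⟩ := gg_cases m r
  have h1 := gg_m2 m r
  have h2 := gg_r2 m r
  have h3 := gg_m2 m (r + 1)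
  rw [show r + 2 - 2 = r by omega, show r + 2 - 1 = r + 1 by omega]
  refine ⟨W, hW, ?_⟩
  rcases h with h | h | h | h
  · left
    refine ⟨?_, ?_, ?_, ?_, ?_, ?_⟩ <;> omega
  · right; left
    refine ⟨?_, ?_, ?_, ?_, ?_, ?_⟩ <;> omega
  · right; right; left
    refine ⟨?_, ?_, ?_, ?_, ?_, ?_⟩ <;> omega
  · right; right; right
    refine ⟨?_, ?_, ?_, ?_, ?_, ?_⟩ <;> omega

theorem gg_pos (m r : ℕ) : 1 ≤ gg m r := by
  unfold gg
  exact Nat.mul_pos (by positivity) (by positivity)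

section
variable {V K : Type} [DecidableEq V] [DecidableEq K] {c : V → V → K} {A : Finset V}
  {M R : Finset K} {i j : K} {p : V → V} {x : V}

theorem bip_bound (hs : ∀ u v, c u v = c v u) (hI : IHyp c M R) (hA : Ok c A M R)
    {X Y : Finset V} (hXY : X ∪ Y = A) (hd : Disjoint X Y) (hX : X.Nonempty) (hY : Y.Nonempty)
    (hJ : Join c i X Y) : A.card ≤ gg M.card R.card := by
  have hXA : X ⊆ A := hXY ▸ Finset.subset_union_left
  have hYA : Y ⊆ A := hXY ▸ Finset.subset_union_right
  have hJ' := hJ.symm hs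
  have hcard : A.card = X.card + Y.card := by rw [← hXY, Finset.card_union_of_disjoint hd]
  have hi : i ∈ M ∨ i ∈ R := by
    obtain ⟨x, hx⟩ := hX
    obtain ⟨y, hy⟩ := hY
    have e := hJ x hx y hy
    have := hA.col x (hXA hx) y (hYA hy) e.1
    rwa [e.2] at this
  rcases hi with hi | hi
  · have h1 := bM hI hA hXA hi (hJ.noEdge_of_noTri hXA hYA (hA.tri i hi) hY)
    have h2 := bM hI hA hYA hi (hJ'.noEdge_of_noTri hYA hXA (hA.tri i hi) hX)
    have := ar_M R.card (Finset.card_pos.2 ⟨i, hi⟩)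
    omega
  · have hn := hA.noH i hi
    obtain ⟨W, hW, har⟩ := ar_R M.card (Finset.card_pos.2 ⟨i, hi⟩)
    have hXp := hX.card_pos
    have hYp := hY.card_pos
    obtain ⟨D, hD, hDc, hDt⟩ := hJ.del hs hXA hYA hn hY
    have hD1 := bR1 hI hA (hD.trans hXA) hi hDt
    obtain ⟨D', hD', hDc', hDt'⟩ := hJ'.del hs hYA hXA hn hX
    have hD1' := bR1 hI hA (hD'.trans hYA) hi hDt'
    by_cases hx1 : X.card = 1
    · omega
    by_cases hy1 : Y.card = 1
    · omega
    by_cases h4 : A.card ≤ 4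
    · omega
    have tX := bR1 hI hA hXA hi (hJ.noTri_of_noH hs hXA hYA hn (by omega))
    have tY := bR1 hI hA hYA hi (hJ'.noTri_of_noH hs hYA hXA hn (by omega))
    have : NoEdge c X i ∨ NoEdge c Y i := by
      by_cases h3 : 3 ≤ X.card
      · exact hJ.noEdge_of_noH hs hXA hYA hn h3
      · exact (hJ'.noEdge_of_noH hs hYA hXA hn (by omega)).symm
    rcases this with e | e
    · have := bR0 hI hA hXA hi e
      omega
    · have := bR0 hI hA hYA hi e
      omega

/-- no monochromatic bipartition -/
def NoBip (c : V → V → K) (A : Finset V) : Prop :=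
  ∀ X Y l, X ∪ Y = A → Disjoint X Y → X.Nonempty → Y.Nonempty → ¬ Join c l X Y

/-- fiber -/
def fib (A : Finset V) (p : V → V) (x : V) : Finset V := A.filter (fun y => p y = p x)

/-- outside neighbours of the fiber of `x` -/
def nb (c : V → V → K) (A : Finset V) (p : V → V) (x : V) (i : K) : Finset V :=
  A.filter (fun y => p y ≠ p x ∧ c x y = i)

theorem fib_sub : fib A p x ⊆ A := Finset.filter_subset _ _

theorem nb_sub : nb c A p x i ⊆ A := Finset.filter_subset _ _

theorem Par.swap (h : Par c A p i j) : Par c A p j i :=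
  ⟨h.mem, h.idem, h.hom, fun x hx y hy e => (h.two x hx y hy e).symm⟩

theorem Par.hom' (h : Par c A p i j) {x y x' y' : V} (hx : x ∈ A) (hy : y ∈ A) (hx' : x' ∈ A)
    (hy' : y' ∈ A) (e1 : p x = p x') (e2 : p y = p y') (hn : p x ≠ p y) : c x y = c x' y' := by
  rw [h.hom x hx y hy hn, h.hom x' hx' y' hy' (by rwa [← e1, ← e2]), e1, e2]

theorem Par.join (h : Par c A p i j) (hx : x ∈ A) (l : K) :
    Join c l (fib A p x) (nb c A p x l) := by
  intro u hu v hv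
  simp only [fib, nb, Finset.mem_filter] at hu hv
  have hne : p u ≠ p v := by rw [hu.2]; exact hv.2.1.symm
  refine ⟨fun e => hne (by rw [e]), ?_⟩
  rw [← hv.2.2]
  exact h.hom' hu.1 hv.1 hx hv.1 hu.2 rfl hne

theorem Par.union (h : Par c A p i j) (hx : x ∈ A) :
    fib A p x ∪ nb c A p x i ∪ nb c A p x j = A := by
  ext y
  simp only [fib, nb, Finset.mem_union, Finset.mem_filter]
  constructor
  · rintro ((h | h) | h) <;> exact h.1
  · intro hy
    by_cases e : p y = p x
    · exact Or.inl (Or.inl ⟨hy, e⟩)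
    · rcases h.two x hx y hy (Ne.symm e) with h1 | h1
      · exact Or.inl (Or.inr ⟨hy, e, h1⟩)
      · exact Or.inr ⟨hy, e, h1⟩

theorem nb_disj : Disjoint (fib A p x) (nb c A p x i) := by
  rw [Finset.disjoint_left]
  intro y hy hy'
  simp only [fib, nb, Finset.mem_filter] at hy hy'
  exact hy'.2.1 hy.2

theorem nb_disj' (hij : i ≠ j) : Disjoint (nb c A p x i) (nb c A p x j) := by
  rw [Finset.disjoint_left]
  intro y hy hy'
  simp only [nb, Finset.mem_filter] at hy hy'
  exact hij (hy.2.2.symm.trans hy'.2.2)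

theorem Par.card (h : Par c A p i j) (hij : i ≠ j) (hx : x ∈ A) :
    A.card = (fib A p x).card + (nb c A p x i).card + (nb c A p x j).card := by
  conv_lhs => rw [← h.union hx]
  rw [Finset.card_union_of_disjoint, Finset.card_union_of_disjoint nb_disj]
  rw [Finset.disjoint_union_left]
  exact ⟨nb_disj, nb_disj' hij⟩

theorem mem_fib (hx : x ∈ A) : x ∈ fib A p x := by
  simp [fib, hx]

theorem Par.ne_of_noBip (h : Par c A p i j) (hN : NoBip c A)
    (hne : ∃ x ∈ A, ∃ y ∈ A, p x ≠ p y) : i ≠ j := by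
  rintro rfl
  obtain ⟨x, hx, y, hy, hxy⟩ := hne
  have hu := h.union hx
  rw [Finset.union_assoc, Finset.union_self] at hu
  refine hN _ _ i hu nb_disj ⟨x, mem_fib hx⟩ ⟨y, ?_⟩ (h.join hx i)
  simp only [nb, Finset.mem_filter]
  exact ⟨hy, hxy.symm, (h.two x hx y hy hxy).elim id id⟩

theorem Par.nb_ne (h : Par c A p i j) (hN : NoBip c A)
    (hne : ∃ x ∈ A, ∃ y ∈ A, p x ≠ p y) (hx : x ∈ A) : (nb c A p x i).Nonempty := by
  rw [Finset.nonempty_iff_ne_empty]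
  intro he
  have hu := h.union hx
  rw [he, Finset.union_empty] at hu
  refine hN _ _ j hu nb_disj ⟨x, mem_fib hx⟩ ?_ (h.join hx j)
  rw [Finset.nonempty_iff_ne_empty]
  intro he'
  rw [he', Finset.union_empty] at hu
  obtain ⟨y, hy, z, hz, hyz⟩ := hne
  rw [← hu] at hy hz
  simp only [fib, Finset.mem_filter] at hy hz
  exact hyz (hy.2.trans hz.2.symm)

/-- bundled partition facts -/
structure Pr (c : V → V → K) (A : Finset V) (p : V → V) (i j : K) : Prop extends
    Par c A p i j where
  ij : i ≠ j
  ni : ∀ x ∈ A, (nb c A p x i).Nonempty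
  nj : ∀ x ∈ A, (nb c A p x j).Nonempty
  nobip : NoBip c A

theorem Pr.swap (h : Pr c A p i j) : Pr c A p j i :=
  ⟨h.toPar.swap, h.ij.symm, h.nj, h.ni, h.nobip⟩

theorem Pr.image_sub (h : Pr c A p i j) : A.image p ⊆ A := by
  intro x hx
  obtain ⟨y, hy, rfl⟩ := Finset.mem_image.1 hx
  exact h.mem y hy

theorem Pr.image_two (h : Pr c A p i j) : TwoCol c (A.image p) i j := by
  intro x hx y hy hxy
  have hx' := h.image_sub hx
  have hy' := h.image_sub hy
  refine h.two x hx' y hy' ?_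
  obtain ⟨a, ha, rfl⟩ := Finset.mem_image.1 hx
  obtain ⟨b, hb, rfl⟩ := Finset.mem_image.1 hy
  rwa [h.idem a ha, h.idem b hb]

theorem Pr.card_le (n t : ℕ) (h1 : (A.image p).card ≤ t)
    (h2 : ∀ x ∈ A, (fib A p x).card ≤ n) : A.card ≤ t * n := by
  calc A.card ≤ n * (A.image p).card := by
        apply Finset.card_le_mul_card_image
        intro b hb
        obtain ⟨x, hx, rfl⟩ := Finset.mem_image.1 hb
        exact h2 x hx
    _ ≤ n * t := Nat.mul_le_mul_left _ h1
    _ = t * n := Nat.mul_comm _ _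

theorem fib_sub_nb (h : Pr c A p i j) (hx : x ∈ A) {y : V} (hy : y ∈ nb c A p x i) :
    fib A p y ⊆ nb c A p x i := by
  intro z hz
  simp only [fib, nb, Finset.mem_filter] at hy hz ⊢
  have hne : p z ≠ p x := by rw [hz.2]; exact hy.2.1
  exact ⟨hz.1, hne, by rw [h.hom' hx hz.1 hx hy.1 rfl hz.2 hne.symm]; exact hy.2.2⟩

/-- both colors triangle type -/
theorem caseMM (hI : IHyp c M R) (hA : Ok c A M R) (h : Pr c A p i j)
    (hi : i ∈ M) (hj : j ∈ M) : A.card ≤ gg M.card R.card := by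
  have h5 := r33 h.ij h.image_two ((hA.tri i hi).mono h.image_sub)
    ((hA.tri j hj).mono h.image_sub)
  have := Pr.card_le (gg (M.card - 2) R.card) 5 h5 (fun x hx =>
    bMM hI hA fib_sub h.ij hi hj
      ((h.join hx i).noEdge_of_noTri fib_sub nb_sub (hA.tri i hi) (h.ni x hx))
      ((h.join hx j).noEdge_of_noTri fib_sub nb_sub (hA.tri j hj) (h.nj x hx)))
  rw [ar_MM R.card (Finset.one_lt_card.2 ⟨i, hi, j, hj, h.ij⟩)]
  exact this

/-- one triangle color, one clean color -/
theorem caseMR (hs : ∀ u v, c u v = c v u) (hI : IHyp c M R) (hA : Ok c A M R)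
    (h : Pr c A p i j)
    (hi : i ∈ M) (hj : j ∈ R) (hc : NoK4 c A j) : A.card ≤ gg M.card R.card := by
  obtain ⟨W, hW, har⟩ := ar_MR (Finset.card_pos.2 ⟨i, hi⟩) (Finset.card_pos.2 ⟨j, hj⟩)
  have e1 : ∀ x ∈ A, NoEdge c (fib A p x) i := fun x hx =>
    (h.join hx i).noEdge_of_noTri fib_sub nb_sub (hA.tri i hi) (h.ni x hx)
  by_cases hall : ∀ x ∈ A, NoEdge c (fib A p x) j
  · have h8 := r34 hs h.ij h.image_two ((hA.tri i hi).mono h.image_sub) (hc.mono h.image_sub)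
    have := Pr.card_le (gg (M.card - 1) (R.card - 1)) 8 h8 (fun x hx =>
      bMR0 hI hA fib_sub hi hj (e1 x hx) (hall x hx))
    omega
  · push Not at hall
    obtain ⟨x, hx, hxe⟩ := hall
    have b1 := bMR1 hI hA fib_sub hi hj (e1 x hx)
      ((h.join hx j).noTri_of_noK4 fib_sub nb_sub hc (h.nj x hx))
    have b2 := bR0 hI hA nb_sub hj
      (((h.join hx j).symm hs).noEdge_of_noK4 nb_sub fib_sub hc hxe)
    have b3 := bM hI hA nb_sub hi
      (((h.join hx i).symm hs).noEdge_of_noTri nb_sub fib_sub (hA.tri i hi) ⟨x, mem_fib hx⟩)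
    have := h.toPar.card h.ij hx
    omega

theorem nb_bound (hs : ∀ u v, c u v = c v u) (hI : IHyp c M R) (hA : Ok c A M R)
    (h : Pr c A p i j)
    (hi : i ∈ R) (hj : j ∈ R) (hcj : NoK4 c A j) (hx : x ∈ A)
    (he : NoEdge c (nb c A p x i) i) :
    (nb c A p x i).card ≤ gg M.card (R.card - 2) + gg (M.card + 1) (R.card - 2) := by
  obtain ⟨y, hy⟩ := h.ni x hx
  have hyA : y ∈ A := nb_sub hy
  have hsub := fib_sub_nb h hx hy
  have hcard := Finset.card_sdiff_add_card_eq_card hsub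
  have t1 : NoTri c (fib A p y) j :=
    (h.join hyA j).noTri_of_noK4 fib_sub nb_sub hcj (h.nj y hyA)
  have b1 := bRR01 hI hA fib_sub h.ij hi hj (he.mono hsub) t1
  have hS : nb c A p x i \ fib A p y ⊆ nb c A p x i := Finset.sdiff_subset
  have hJ : Join c j (fib A p y) (nb c A p x i \ fib A p y) := by
    intro u hu v hv
    rw [Finset.mem_sdiff] at hv
    have huA := fib_sub hu
    have hvA := nb_sub hv.1
    have hne : p u ≠ p v := by
      intro e
      apply hv.2
      simp only [fib, Finset.mem_filter] at hu ⊢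
      exact ⟨hvA, e ▸ hu.2⟩
    have hne' : u ≠ v := fun e => hne (by rw [e])
    exact ⟨hne', (h.two u huA v hvA hne).resolve_left
      (fun e => he u (hsub hu) v hv.1 ⟨hne', e⟩)⟩
  have t2 : NoTri c (nb c A p x i \ fib A p y) j :=
    (hJ.symm hs).noTri_of_noK4 (hS.trans nb_sub) fib_sub hcj ⟨y, mem_fib hyA⟩
  have b2 := bRR01 hI hA (hS.trans nb_sub) h.ij hi hj (he.mono hS) t2
  by_cases e : NoEdge c (fib A p y) j
  · have := bRR00 hI hA fib_sub h.ij hi hj (he.mono hsub) e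
    omega
  · have e' := (hJ.symm hs).noEdge_of_noK4 (hS.trans nb_sub) fib_sub hcj e
    have := bRR00 hI hA (hS.trans nb_sub) h.ij hi hj (he.mono hS) e'
    omega

theorem two_le_of_mem (hij : i ≠ j) (hi : i ∈ R) (hj : j ∈ R) : 2 ≤ R.card :=
  Finset.one_lt_card.2 ⟨i, hi, j, hj, hij⟩

theorem caseRR_edge (hs : ∀ u v, c u v = c v u) (hI : IHyp c M R) (hA : Ok c A M R)
    (h : Pr c A p i j)
    (hi : i ∈ R) (hj : j ∈ R) (hci : NoK4 c A i) (hcj : NoK4 c A j) (hx : x ∈ A)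
    (hxe : ¬ NoEdge c (fib A p x) i) : A.card ≤ gg M.card R.card := by
  obtain ⟨W, hW, har⟩ := ar_RR M.card (two_le_of_mem h.ij hi hj)
  have hcard := h.toPar.card h.ij hx
  have ti := (h.join hx i).noTri_of_noK4 fib_sub nb_sub hci (h.ni x hx)
  have tj := (h.join hx j).noTri_of_noK4 fib_sub nb_sub hcj (h.nj x hx)
  have ei := ((h.join hx i).symm hs).noEdge_of_noK4 nb_sub fib_sub hci hxe
  have b1 := nb_bound hs hI hA h hi hj hcj hx ei
  by_cases hxe' : NoEdge c (fib A p x) j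
  · have b2 := bRR01 hI hA fib_sub h.ij.symm hj hi hxe' ti
    have b3 := bR1 hI hA nb_sub hj
      (((h.join hx j).symm hs).noTri_of_noK4 nb_sub fib_sub hcj ⟨x, mem_fib hx⟩)
    omega
  · have b2 := bRR11 hI hA fib_sub h.ij hi hj ti tj
    have b3 := bR0 hI hA nb_sub hj
      (((h.join hx j).symm hs).noEdge_of_noK4 nb_sub fib_sub hcj hxe')
    omega

theorem caseRR (hs : ∀ u v, c u v = c v u) (hI : IHyp c M R) (hA : Ok c A M R)
    (h : Pr c A p i j)
    (hi : i ∈ R) (hj : j ∈ R) (hci : NoK4 c A i) (hcj : NoK4 c A j) :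
    A.card ≤ gg M.card R.card := by
  by_cases h1 : ∀ x ∈ A, NoEdge c (fib A p x) i
  · by_cases h2 : ∀ x ∈ A, NoEdge c (fib A p x) j
    · obtain ⟨W, hW, har⟩ := ar_RR M.card (two_le_of_mem h.ij hi hj)
      have h17 := r44 hs h.ij h.image_two (hci.mono h.image_sub) (hcj.mono h.image_sub)
      have := Pr.card_le (gg M.card (R.card - 2)) 17 h17 (fun x hx =>
        bRR00 hI hA fib_sub h.ij hi hj (h1 x hx) (h2 x hx))
      omega
    · push Not at h2
      obtain ⟨x, hx, hxe⟩ := h2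
      exact caseRR_edge hs hI hA h.swap hj hi hcj hci hx hxe
  · push Not at h1
    obtain ⟨x, hx, hxe⟩ := h1
    exact caseRR_edge hs hI hA h hi hj hci hcj hx hxe

/-- a fiber with a unique outside neighbour in color `i`, the other color of triangle type -/
theorem alphaMR (hs : ∀ u v, c u v = c v u) (hI : IHyp c M R) (hA : Ok c A M R)
    (h : Pr c A p i j)
    (hi : i ∈ R) (hj : j ∈ M) (hx : x ∈ A) (h1 : (nb c A p x i).card = 1) :
    A.card ≤ gg M.card R.card := by
  obtain ⟨W, hW, har⟩ := ar_MR (Finset.card_pos.2 ⟨j, hj⟩) (Finset.card_pos.2 ⟨i, hi⟩)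
  have hcard := h.toPar.card h.ij hx
  obtain ⟨D, hD, hDc, hDt⟩ := (h.join hx i).del hs fib_sub nb_sub (hA.noH i hi) (h.ni x hx)
  have e1 := (h.join hx j).noEdge_of_noTri fib_sub nb_sub (hA.tri j hj) (h.nj x hx)
  have b1 := bMR1 hI hA (hD.trans fib_sub) hj hi (e1.mono hD) hDt
  have b2 := bM hI hA nb_sub hj
    (((h.join hx j).symm hs).noEdge_of_noTri nb_sub fib_sub (hA.tri j hj) ⟨x, mem_fib hx⟩)
  omega

theorem alphaRR (hs : ∀ u v, c u v = c v u) (hI : IHyp c M R) (hA : Ok c A M R)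
    (h : Pr c A p i j)
    (hi : i ∈ R) (hj : j ∈ R) (hx : x ∈ A) (h1 : (nb c A p x i).card = 1)
    (h3 : 3 ≤ (fib A p x).card) :
    A.card ≤ gg M.card R.card := by
  obtain ⟨W, hW, har⟩ := ar_RR M.card (two_le_of_mem h.ij hi hj)
  have hcard := h.toPar.card h.ij hx
  have hp := (h.nj x hx).card_pos
  have h2 : 2 ≤ (nb c A p x j).card := by
    by_contra hc
    obtain ⟨w, hw⟩ := Finset.card_eq_one.1 h1
    obtain ⟨w', hw'⟩ := Finset.card_eq_one.1 (show (nb c A p x j).card = 1 by omega)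
    have hu := h.toPar.union hx
    have hJ := h.join hx i
    have hJ' := h.join hx j
    have hd1 : Disjoint (fib A p x) (nb c A p x i) := nb_disj
    have hd2 : Disjoint (fib A p x) (nb c A p x j) := nb_disj
    have hd3 : Disjoint (nb c A p x i) (nb c A p x j) := nb_disj' h.ij
    have hwA : w ∈ A := nb_sub (c := c) (p := p) (x := x) (i := i) (by rw [hw]; simp)
    have hw'A : w' ∈ A := nb_sub (c := c) (p := p) (x := x) (i := j) (by rw [hw']; simp)
    have hne : w ≠ w' := by
      rw [hw, hw'] at hd3
      simpa using hd3
    have hpp : p w ≠ p w' := by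
      intro e
      have : w' ∈ fib A p w := by simp [fib, hw'A, e]
      have := fib_sub_nb h hx (y := w) (by rw [hw]; simp) this
      rw [hw] at this
      exact hne (Finset.mem_singleton.1 this).symm
    rw [hw] at hu hJ hd1 hd3
    rw [hw'] at hu hJ' hd2 hd3
    rcases h.two w hwA w' hw'A hpp with e | e
    · refine h.nobip (fib A p x ∪ {w'}) {w} i ?_ ?_ ⟨x, by simp [mem_fib hx]⟩ ⟨w, by simp⟩ ?_
      · exact (Finset.union_right_comm _ _ _).trans hu
      · rw [Finset.disjoint_union_left]
        exact ⟨hd1, hd3.symm⟩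
      · intro u hu' v hv
        obtain rfl : v = w := by simpa using hv
        rcases Finset.mem_union.1 hu' with hu' | hu'
        · exact hJ u hu' _ (by simp)
        · obtain rfl : u = w' := by simpa using hu'
          exact ⟨hne.symm, by rw [hs]; exact e⟩
    · refine h.nobip (fib A p x ∪ {w}) {w'} j hu ?_ ⟨x, by simp [mem_fib hx]⟩ ⟨w', by simp⟩ ?_
      · rw [Finset.disjoint_union_left]
        exact ⟨hd2, hd3⟩
      · intro u hu' v hv
        obtain rfl : v = w' := by simpa using hv
        rcases Finset.mem_union.1 hu' with hu' | hu'
        · exact hJ' u hu' _ (by simp)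
        · obtain rfl : u = w := by simpa using hu'
          exact ⟨hne, e⟩
  have hn := hA.noH j hj
  obtain ⟨D, hD, hDc, hDt⟩ := (h.join hx i).del hs fib_sub nb_sub (hA.noH i hi) (h.ni x hx)
  have t1 := (h.join hx j).noTri_of_noH hs fib_sub nb_sub hn h2
  have t2 := ((h.join hx j).symm hs).noTri_of_noH hs nb_sub fib_sub hn (by omega)
  rcases (h.join hx j).noEdge_of_noH hs fib_sub nb_sub hn h3 with e | e
  · have b1 := bRR01 hI hA (hD.trans fib_sub) h.ij.symm hj hi (e.mono hD) hDt
    have b2 := bR1 hI hA nb_sub hj t2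
    omega
  · have b1 := bRR11 hI hA (hD.trans fib_sub) h.ij hi hj hDt (t1.mono hD)
    have b2 := bR0 hI hA nb_sub hj e
    omega

theorem IsK4.s12 (hs : ∀ u v, c u v = c v u) {a b d e : V} (h : IsK4 c i a b d e) :
    IsK4 c i b a d e :=
  ⟨h.1.symm hs, h.2.2.2.1, h.2.2.2.2.1, h.2.1, h.2.2.1, h.2.2.2.2.2⟩

theorem IsK4.s23 (hs : ∀ u v, c u v = c v u) {a b d e : V} (h : IsK4 c i a b d e) :
    IsK4 c i a d b e :=
  ⟨h.2.1, h.1, h.2.2.1, h.2.2.2.1.symm hs, h.2.2.2.2.2, h.2.2.2.2.1⟩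

theorem IsK4.s34 (hs : ∀ u v, c u v = c v u) {a b d e : V} (h : IsK4 c i a b d e) :
    IsK4 c i a b e d :=
  ⟨h.1, h.2.2.1, h.2.1, h.2.2.2.2.1, h.2.2.2.1, h.2.2.2.2.2.symm hs⟩

theorem k4_fib (hs : ∀ u v, c u v = c v u) (hn : NoH c A i) (h : Pr c A p i j)
    (hnt : ∀ x ∈ A, NoTri c (fib A p x) i) {a b d e w : V} (ha : a ∈ A) (hb : b ∈ A)
    (hd : d ∈ A) (he : e ∈ A) (hw : w ∈ A) (hK : IsK4 c i a b d e) (wa : w ≠ a) (wb : w ≠ b)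
    (wd : w ≠ d) (we : w ≠ e) : p w ≠ p a := by
  intro hp
  have hE : ∀ q ∈ A, p q ≠ p a → Ed c i a q → Ed c i w q := by
    intro q hq hqa hE
    refine ⟨fun e => hqa (by rw [← e, hp]), ?_⟩
    rw [← hE.2]
    exact h.hom' hw hq ha hq hp rfl (by rw [hp]; exact hqa.symm)
  have hT : ∀ q ∈ A, ∀ q' ∈ A, Ed c i a q → Ed c i a q' → Ed c i q q' →
      p q ≠ p a ∨ p q' ≠ p a := by
    intro q hq q' hq' e1 e2 e3
    by_contra hcon
    push Not at hcon
    exact hnt a ha a (mem_fib ha) q (by simp [fib, hq, hcon.1]) q' (by simp [fib, hq', hcon.2])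
      e1 e2 e3
  have hK2 := hK
  obtain ⟨k1, k2, k3, k4, k5, k6⟩ := hK2
  have t1 := hT b hb d hd k1 k2 k4
  have t2 := hT b hb e he k1 k3 k5
  have t3 := hT d hd e he k2 k3 k6
  by_cases q1 : p b = p a
  · have q2 := t1.resolve_left (fun f => f q1)
    have q3 := t2.resolve_left (fun f => f q1)
    -- d, e outside
    exact hn d hd e he a ha b hb w hw
      ⟨k6, k2.symm hs, k4.symm hs, k3.symm hs, k5.symm hs, k1⟩
      (hE d hd q2 k2) (hE e he q3 k3) wa wb
  · by_cases q2 : p d = p a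
    · have q3 := t3.resolve_left (fun f => f q2)
      exact hn b hb e he a ha d hd w hw
        ⟨k5, k1.symm hs, k4, k3.symm hs, k6.symm hs, k2⟩
        (hE b hb q1 k1) (hE e he q3 k3) wa wd
    · exact hn b hb d hd a ha e he w hw
        ⟨k4, k1.symm hs, k5, k2.symm hs, k6, k3⟩
        (hE b hb q1 k1) (hE d hd q2 k2) wa we
end


section
variable {V K : Type} [DecidableEq V] [DecidableEq K] {c : V → V → K} {A : Finset V}
  {M R : Finset K} {i j : K} {p : V → V} {x : V}

/-- two of three vertices of a 4-clique see a common outside vertex -/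
theorem q_one (hs : ∀ u v, c u v = c v u) (hn : NoH c A j) {x y z q b : V} (hx : x ∈ A)
    (hy : y ∈ A) (hz : z ∈ A) (hq : q ∈ A) (hb : b ∈ A) (hK : IsK4 c j x y z q) (bq : b ≠ q)
    (bx : b ≠ x) (bY : b ≠ y) (bz : b ≠ z) :
    ¬ (Ed c j x b ∧ Ed c j y b) ∧ ¬ (Ed c j x b ∧ Ed c j z b) ∧ ¬ (Ed c j y b ∧ Ed c j z b) := by
  refine ⟨fun h => ?_, fun h => ?_, fun h => ?_⟩
  · exact hn x hx y hy z hz q hq b hb hK (h.1.symm hs) (h.2.symm hs) bz bq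
  · exact hn x hx z hz y hy q hq b hb (hK.s23 hs) (h.1.symm hs) (h.2.symm hs) bY bq
  · exact hn y hy z hz x hx q hq b hb ((hK.s12 hs).s23 hs) (h.1.symm hs) (h.2.symm hs) bx bq

theorem q_tri (hs : ∀ u v, c u v = c v u) (hn : NoH c A j) {x y z q b d : V} (hx : x ∈ A)
    (hy : y ∈ A) (hz : z ∈ A) (hq : q ∈ A) (hb : b ∈ A) (hd : d ∈ A) (hK : IsK4 c j x y z q)
    (bq : b ≠ q) (bx : b ≠ x) (bY : b ≠ y) (bz : b ≠ z)
    (dq : d ≠ q) (dx : d ≠ x) (dy : d ≠ y) (dz : d ≠ z)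
    (hX : Ed c j x b ∨ Ed c j x d) (hY : Ed c j y b ∨ Ed c j y d) (hZ : Ed c j z b ∨ Ed c j z d) :
    False := by
  have h1 := q_one hs hn hx hy hz hq hb hK bq bx bY bz
  have h2 := q_one hs hn hx hy hz hq hd hK dq dx dy dz
  tauto

/-- facts about an `i`-clique on four vertices and the rest -/
theorem q_facts (hs : ∀ u v, c u v = c v u) (hn : NoH c A i) (h : Pr c A p i j)
    (hnt : ∀ x ∈ A, NoTri c (fib A p x) i) {a b d e w : V} (ha : a ∈ A) (hb : b ∈ A)
    (hd : d ∈ A) (he : e ∈ A) (hw : w ∈ A) (hK : IsK4 c i a b d e) (wa : w ≠ a) (wb : w ≠ b)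
    (wd : w ≠ d) (we : w ≠ e) :
    (Ed c j w a ∨ Ed c j w b) ∧ (Ed c j w a ∨ Ed c j w d) ∧ (Ed c j w a ∨ Ed c j w e) := by
  have key : ∀ a b d e : V, a ∈ A → b ∈ A → d ∈ A → e ∈ A → IsK4 c i a b d e → w ≠ a → w ≠ b →
      w ≠ d → w ≠ e → Ed c i w a ∨ Ed c j w a := by
    intro a b d e ha hb hd he hK wa wb wd we
    have hp := k4_fib hs hn h hnt ha hb hd he hw hK wa wb wd we
    exact (h.two w hw a ha hp).imp (fun e => ⟨wa, e⟩) (fun e => ⟨wa, e⟩)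
  have k1 := key a b d e ha hb hd he hK wa wb wd we
  have k2 := key b a d e hb ha hd he (hK.s12 hs) wb wa wd we
  have k3 := key d a b e hd ha hb he ((hK.s23 hs).s12 hs) wd wa wb we
  have k4 := key e a b d he ha hb hd (((hK.s34 hs).s23 hs).s12 hs) we wa wb wd
  have u1 : Ed c i w a → Ed c i w b → False := fun e1 e2 =>
    hn a ha b hb d hd e he w hw hK e1 e2 wd we
  have u2 : Ed c i w a → Ed c i w d → False := fun e1 e2 =>
    hn a ha d hd b hb e he w hw (hK.s23 hs) e1 e2 wb we
  have u3 : Ed c i w a → Ed c i w e → False := fun e1 e2 =>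
    hn a ha e he b hb d hd w hw ((hK.s34 hs).s23 hs) e1 e2 wb wd
  tauto

theorem q_all (hs : ∀ u v, c u v = c v u) (hn : NoH c A i) (h : Pr c A p i j)
    (hnt : ∀ x ∈ A, NoTri c (fib A p x) i) {a b d e w : V} (ha : a ∈ A) (hb : b ∈ A)
    (hd : d ∈ A) (he : e ∈ A) (hw : w ∈ A) (hK : IsK4 c i a b d e) (wa : w ≠ a) (wb : w ≠ b)
    (wd : w ≠ d) (we : w ≠ e) :
    ((Ed c j w a ∨ Ed c j w b) ∧ (Ed c j w a ∨ Ed c j w d) ∧ (Ed c j w a ∨ Ed c j w e)) ∧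
    (Ed c j w b ∨ Ed c j w d) ∧ (Ed c j w b ∨ Ed c j w e) ∧ (Ed c j w d ∨ Ed c j w e) := by
  have k1 := q_facts hs hn h hnt ha hb hd he hw hK wa wb wd we
  have k2 := q_facts hs hn h hnt hb ha hd he hw (hK.s12 hs) wb wa wd we
  have k3 := q_facts hs hn h hnt hd ha hb he hw ((hK.s23 hs).s12 hs) wd wa wb we
  exact ⟨k1, k2.2.1, k2.2.2, k3.2.2⟩

theorem q_card (a b d e : V) (A : Finset V) : A.card ≤ 4 + (A \ {a, b, d, e}).card := by
  have h1 := Finset.le_card_sdiff ({a, b, d, e} : Finset V) A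
  have h2 : ({a, b, d, e} : Finset V).card ≤ 4 := Finset.card_le_four
  omega

theorem betaMR (hs : ∀ u v, c u v = c v u) (hI : IHyp c M R) (hA : Ok c A M R)
    (h : Pr c A p i j) (hi : i ∈ R) (hj : j ∈ M)
    (hnt : ∀ x ∈ A, NoTri c (fib A p x) i) {a b d e : V} (ha : a ∈ A) (hb : b ∈ A)
    (hd : d ∈ A) (he : e ∈ A) (hK : IsK4 c i a b d e) : A.card ≤ gg M.card R.card := by
  obtain ⟨W, hW, har⟩ := ar_MR (Finset.card_pos.2 ⟨j, hj⟩) (Finset.card_pos.2 ⟨i, hi⟩)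
  have hq := q_card a b d e A
  have hne : NoEdge c (A \ {a, b, d, e}) j := by
    intro x hx y hy hxy
    simp only [Finset.mem_sdiff, Finset.mem_insert, Finset.mem_singleton, not_or] at hx hy
    obtain ⟨hx, x1, x2, x3, x4⟩ := hx
    obtain ⟨hy, y1, y2, y3, y4⟩ := hy
    have fx := q_all hs (hA.noH i hi) h hnt ha hb hd he hx hK x1 x2 x3 x4
    have fy := q_all hs (hA.noH i hi) h hnt ha hb hd he hy hK y1 y2 y3 y4
    have t := hA.tri j hj x hx y hy
    have ta := t a ha hxy
    have tb := t b hb hxy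
    have td := t d hd hxy
    clear har hq hK hI hnt h hA t
    grind
  have := bM hI hA Finset.sdiff_subset hj hne
  omega

theorem betaRR (hs : ∀ u v, c u v = c v u) (hI : IHyp c M R) (hA : Ok c A M R)
    (h : Pr c A p i j) (hi : i ∈ R) (hj : j ∈ R)
    (hnt : ∀ x ∈ A, NoTri c (fib A p x) i) {a b d e : V} (ha : a ∈ A) (hb : b ∈ A)
    (hd : d ∈ A) (he : e ∈ A) (hK : IsK4 c i a b d e) : A.card ≤ gg M.card R.card := by
  obtain ⟨W, hW, har⟩ := ar_RR M.card (two_le_of_mem h.ij hi hj)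
  have hq := q_card a b d e A
  have hne : NoTri c (A \ {a, b, d, e}) j := by
    intro x hx y hy z hz hxy hxz hyz
    simp only [Finset.mem_sdiff, Finset.mem_insert, Finset.mem_singleton, not_or] at hx hy hz
    obtain ⟨hx, x1, x2, x3, x4⟩ := hx
    obtain ⟨hy, y1, y2, y3, y4⟩ := hy
    obtain ⟨hz, z1, z2, z3, z4⟩ := hz
    have fx := q_all hs (hA.noH i hi) h hnt ha hb hd he hx hK x1 x2 x3 x4
    have fy := q_all hs (hA.noH i hi) h hnt ha hb hd he hy hK y1 y2 y3 y4
    have fz := q_all hs (hA.noH i hi) h hnt ha hb hd he hz hK z1 z2 z3 z4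
    have hn := hA.noH j hj
    obtain ⟨k1, k2, k3, k4, k5, k6⟩ := hK
    have ca : ¬ (Ed c j x a ∧ Ed c j y a ∧ Ed c j z a) := fun f =>
      q_tri hs hn hx hy hz ha hb hd ⟨hxy, hxz, f.1, hyz, f.2.1, f.2.2⟩
        k1.1.symm (Ne.symm x2) (Ne.symm y2) (Ne.symm z2) k2.1.symm (Ne.symm x3) (Ne.symm y3) (Ne.symm z3)
        fx.2.1 fy.2.1 fz.2.1
    have cb : ¬ (Ed c j x b ∧ Ed c j y b ∧ Ed c j z b) := fun f =>
      q_tri hs hn hx hy hz hb hd he ⟨hxy, hxz, f.1, hyz, f.2.1, f.2.2⟩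
        k4.1.symm (Ne.symm x3) (Ne.symm y3) (Ne.symm z3) k5.1.symm (Ne.symm x4) (Ne.symm y4) (Ne.symm z4)
        fx.2.2.2 fy.2.2.2 fz.2.2.2
    have cd : ¬ (Ed c j x d ∧ Ed c j y d ∧ Ed c j z d) := fun f =>
      q_tri hs hn hx hy hz hd hb he ⟨hxy, hxz, f.1, hyz, f.2.1, f.2.2⟩
        k4.1 (Ne.symm x2) (Ne.symm y2) (Ne.symm z2) k6.1.symm (Ne.symm x4) (Ne.symm y4) (Ne.symm z4)
        fx.2.2.1 fy.2.2.1 fz.2.2.1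
    have ce : ¬ (Ed c j x e ∧ Ed c j y e ∧ Ed c j z e) := fun f =>
      q_tri hs hn hx hy hz he hb hd ⟨hxy, hxz, f.1, hyz, f.2.1, f.2.2⟩
        k5.1 (Ne.symm x2) (Ne.symm y2) (Ne.symm z2) k6.1 (Ne.symm x3) (Ne.symm y3) (Ne.symm z3)
        fx.2.1 fy.2.1 fz.2.1
    clear k1 k2 k3 k4 k5 k6
    grind
  have := bR1 hI hA Finset.sdiff_subset hj hne
  omega

theorem r_dirty (hs : ∀ u v, c u v = c v u) (hI : IHyp c M R) (hA : Ok c A M R)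
    (h : Pr c A p i j) (hi : i ∈ R) (hj : j ∈ M ∨ j ∈ R) (hK : ¬ NoK4 c A i) :
    A.card ≤ gg M.card R.card := by
  by_cases hnt : ∀ x ∈ A, NoTri c (fib A p x) i
  · unfold NoK4 at hK
    push Not at hK
    obtain ⟨a, ha, b, hb, d, hd, e, he, hK⟩ := hK
    rcases hj with hj | hj
    · exact betaMR hs hI hA h hi hj hnt ha hb hd he hK
    · exact betaRR hs hI hA h hi hj hnt ha hb hd he hK
  · push Not at hnt
    obtain ⟨x, hx, ht⟩ := hnt
    have h1 : (nb c A p x i).card = 1 := by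
      have hp := (h.ni x hx).card_pos
      by_contra hc
      exact ht ((h.join hx i).noTri_of_noH hs fib_sub nb_sub (hA.noH i hi) (by omega))
    rcases hj with hj | hj
    · exact alphaMR hs hI hA h hi hj hx h1
    · refine alphaRR hs hI hA h hi hj hx h1 ?_
      unfold NoTri at ht
      push Not at ht
      obtain ⟨u, hu, v, hv, w, hw, e1, e2, e3, -⟩ := ht
      exact Finset.two_lt_card.2 ⟨u, hu, v, hv, w, hw, e1.1, e2.1, e3.1⟩

theorem ub_step (hs : ∀ u v, c u v = c v u) (hG : Gal c) (hI : IHyp c M R) (hA : Ok c A M R) :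
    A.card ≤ gg M.card R.card := by
  by_cases h1 : A.card ≤ 1
  · exact h1.trans (gg_pos _ _)
  by_cases hN : NoBip c A
  · obtain ⟨p, i, j, hP, hne⟩ := gallai_par hs hG _ A rfl (by omega)
    have h : Pr c A p i j := ⟨hP, hP.ne_of_noBip hN hne, fun x hx => hP.nb_ne hN hne hx,
      fun x hx => hP.swap.nb_ne hN hne hx, hN⟩
    obtain ⟨x, hx, -⟩ := hne
    have cl : ∀ l, (nb c A p x l).Nonempty → l ∈ M ∨ l ∈ R := by
      rintro l ⟨y, hy⟩
      have e := hP.join hx l x (mem_fib hx) y hy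
      have := hA.col x hx y (nb_sub hy) e.1
      rwa [e.2] at this
    have ci := cl i (h.ni x hx)
    have cj := cl j (h.nj x hx)
    by_cases di : i ∈ R ∧ ¬ NoK4 c A i
    · exact r_dirty hs hI hA h di.1 cj di.2
    by_cases dj : j ∈ R ∧ ¬ NoK4 c A j
    · exact r_dirty hs hI hA h.swap dj.1 ci dj.2
    have di' : i ∈ R → NoK4 c A i := fun f => by_contra fun g => di ⟨f, g⟩
    have dj' : j ∈ R → NoK4 c A j := fun f => by_contra fun g => dj ⟨f, g⟩
    rcases ci with hi | hi <;> rcases cj with hj | hj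
    · exact caseMM hI hA h hi hj
    · exact caseMR hs hI hA h hi hj (dj' hj)
    · exact caseMR hs hI hA h.swap hj hi (di' hi)
    · exact caseRR hs hI hA h hi hj (di' hi) (dj' hj)
  · unfold NoBip at hN
    push Not at hN
    obtain ⟨X, Y, l, h1, h2, h3, h4, h5⟩ := hN
    exact bip_bound hs hI hA h1 h2 h3 h4 h5

theorem ub_main (hs : ∀ u v, c u v = c v u) (hG : Gal c) (n : ℕ) :
    ∀ (M R : Finset K) (A : Finset V), M.card + 2 * R.card = n → Ok c A M R →
      A.card ≤ gg M.card R.card := by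
  induction n using Nat.strong_induction_on with
  | _ n ih =>
    intro M R A hn hA
    exact ub_step hs hG (fun M' R' B hlt hB => ih _ (hn ▸ hlt) M' R' B rfl hB) hA
end


/-- good inner coloring: no triangle in colors of `M`, no `H₁` in colors of `R` -/
structure Good {V K : Type} (c : V → V → K) (M R : Finset K) : Prop where
  sym : ∀ u v, c u v = c v u
  gal : Gal c
  col : ∀ x y, x ≠ y → c x y ∈ M ∨ c x y ∈ R
  tri : ∀ i ∈ M, ∀ x y z, Ed c i x y → Ed c i x z → Ed c i y z → False
  noH : ∀ i ∈ R, ∀ x y z w e, IsK4 c i x y z w → Ed c i e x → e ≠ y → e ≠ z → e ≠ w → False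

/-- good outer coloring: no triangle in colors of `M`, no `K₄` in colors of `R` -/
structure Outer {V K : Type} (c : V → V → K) (M R : Finset K) : Prop where
  sym : ∀ u v, c u v = c v u
  gal : Gal c
  col : ∀ x y, x ≠ y → c x y ∈ M ∨ c x y ∈ R
  tri : ∀ i ∈ M, ∀ x y z, Ed c i x y → Ed c i x z → Ed c i y z → False
  noK : ∀ i ∈ R, ∀ x y z w, IsK4 c i x y z w → False

/-- lexicographic product coloring -/
def lex {U V K : Type} [DecidableEq U] (co : U → U → K) (c : V → V → K) (p q : U × V) : K :=
  if p.1 = q.1 then c p.2 q.2 else co p.1 q.1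

section
variable {U V K : Type} [DecidableEq U] [DecidableEq K] {co : U → U → K} {c : V → V → K}
  {M R M1 R1 : Finset K} {l : K}

theorem lex_outer (hc : ∀ x y, x ≠ y → c x y ∈ M ∨ c x y ∈ R) (h1 : l ∉ M) (h2 : l ∉ R)
    {p q : U × V} (h : Ed (lex co c) l p q) : Ed co l p.1 q.1 := by
  obtain ⟨hne, he⟩ := h
  unfold lex at he
  by_cases e : p.1 = q.1
  · rw [if_pos e] at he
    have := hc p.2 q.2 (fun e' => hne (Prod.ext e e'))
    rw [he] at this
    exact (this.elim h1 h2).elim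
  · rw [if_neg e] at he
    exact ⟨e, he⟩

theorem lex_inner (hc : ∀ x y, x ≠ y → co x y ∈ M ∨ co x y ∈ R) (h1 : l ∉ M) (h2 : l ∉ R)
    {p q : U × V} (h : Ed (lex co c) l p q) : p.1 = q.1 ∧ Ed c l p.2 q.2 := by
  obtain ⟨hne, he⟩ := h
  unfold lex at he
  by_cases e : p.1 = q.1
  · rw [if_pos e] at he
    exact ⟨e, fun e' => hne (Prod.ext e e'), he⟩
  · rw [if_neg e] at he
    have := hc p.1 q.1 e
    rw [he] at this
    exact (this.elim h1 h2).elim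

theorem lex_good (ho : Outer co M1 R1) (hg : Good c M R) (d1 : Disjoint M1 M)
    (d2 : Disjoint M1 R) (d3 : Disjoint R1 M) (d4 : Disjoint R1 R) :
    Good (lex co c) (M1 ∪ M) (R1 ∪ R) := by
  rw [Finset.disjoint_left] at d1 d2 d3 d4
  refine ⟨?_, ?_, ?_, ?_, ?_⟩
  · intro u v
    unfold lex
    by_cases e : u.1 = v.1
    · rw [if_pos e, if_pos e.symm, hg.sym]
    · rw [if_neg e, if_neg (Ne.symm e), ho.sym]
  · intro u v w huv huw hvw
    unfold lex
    by_cases e1 : u.1 = v.1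
    · by_cases e2 : u.1 = w.1
      · rw [if_pos e1, if_pos e2, if_pos (e1.symm.trans e2)]
        exact hg.gal _ _ _ (fun e => huv (Prod.ext e1 e)) (fun e => huw (Prod.ext e2 e))
          (fun e => hvw (Prod.ext (e1.symm.trans e2) e))
      · right; right
        rw [if_neg e2, if_neg (fun e => e2 (e1.trans e)), e1]
    · by_cases e2 : u.1 = w.1
      · right; left
        rw [if_neg e1, if_neg (fun e => e1 (e2.trans e.symm)), ho.sym, e2]
      · by_cases e3 : v.1 = w.1
        · left
          rw [if_neg e1, if_neg e2, e3]
        · rw [if_neg e1, if_neg e2, if_neg e3]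
          exact ho.gal _ _ _ e1 e2 e3
  · intro u v huv
    simp only [Finset.mem_union]
    unfold lex
    by_cases e : u.1 = v.1
    · rw [if_pos e]
      have := hg.col u.2 v.2 (fun e' => huv (Prod.ext e e'))
      tauto
    · rw [if_neg e]
      have := ho.col u.1 v.1 e
      tauto
  · intro l hl x y z hxy hxz hyz
    rcases Finset.mem_union.1 hl with hl | hl
    · have f : ∀ {p q : U × V}, Ed (lex co c) l p q → Ed co l p.1 q.1 :=
        lex_outer hg.col (d1 hl) (d2 hl)
      exact ho.tri l hl _ _ _ (f hxy) (f hxz) (f hyz)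
    · have f : ∀ {p q : U × V}, Ed (lex co c) l p q → p.1 = q.1 ∧ Ed c l p.2 q.2 :=
        lex_inner ho.col (fun h => d1 h hl) (fun h => d3 h hl)
      exact hg.tri l hl _ _ _ (f hxy).2 (f hxz).2 (f hyz).2
  · intro l hl x y z w e hK hex hey hez hew
    obtain ⟨k1, k2, k3, k4, k5, k6⟩ := hK
    rcases Finset.mem_union.1 hl with hl | hl
    · have f : ∀ {p q : U × V}, Ed (lex co c) l p q → Ed co l p.1 q.1 :=
        lex_outer hg.col (d3 hl) (d4 hl)
      exact ho.noK l hl _ _ _ _ ⟨f k1, f k2, f k3, f k4, f k5, f k6⟩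
    · have f : ∀ {p q : U × V}, Ed (lex co c) l p q → p.1 = q.1 ∧ Ed c l p.2 q.2 :=
        lex_inner ho.col (fun h => d2 h hl) (fun h => d4 h hl)
      have e0 := (f hex).1
      exact hg.noH l hl _ _ _ _ _
        ⟨(f k1).2, (f k2).2, (f k3).2, (f k4).2, (f k5).2, (f k6).2⟩ (f hex).2
        (fun h => hey (Prod.ext (e0.trans (f k1).1) h))
        (fun h => hez (Prod.ext (e0.trans (f k2).1) h))
        (fun h => hew (Prod.ext (e0.trans (f k3).1) h))
end

/-- 2-coloring from a Boolean function -/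
def bcol {U K : Type} (f : U → U → Bool) (i j : K) (x y : U) : K := if f x y then i else j

theorem bcol_gal {U K : Type} (f : U → U → Bool) (i j : K) : Gal (bcol f i j) := by
  intro u v w _ _ _
  unfold bcol
  cases f u v <;> cases f u w <;> cases f v w <;> simp

theorem bcol_ed {U K : Type} [DecidableEq K] {f : U → U → Bool} {i j l : K} (hij : i ≠ j)
    {x y : U} (h : Ed (bcol f i j) l x y) : x ≠ y ∧ f x y = decide (l = i) := by
  obtain ⟨h1, h2⟩ := h
  refine ⟨h1, ?_⟩
  unfold bcol at h2
  cases hf : f x y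
  · simp [hf] at h2
    subst h2
    simp [hij.symm]
  · simp [hf] at h2
    simp [h2]

/-- pentagon differences -/
def f5 (x y : ZMod 5) : Bool := decide (y - x = 1 ∨ y - x = 4)

/-- quadratic residues -/
def s17 (a : ZMod 17) : Bool :=
  decide (a = 1 ∨ a = 2 ∨ a = 4 ∨ a = 8 ∨ a = 9 ∨ a = 13 ∨ a = 15 ∨ a = 16)

theorem f5_sym : ∀ x y : ZMod 5, f5 x y = f5 y x := by decide

theorem f5_tri : ∀ x y z : ZMod 5, x ≠ y → x ≠ z → y ≠ z → f5 x y = f5 x z →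
    f5 x y = f5 y z → False := by decide

theorem s17_neg : ∀ a : ZMod 17, s17 (-a) = s17 a := by decide +kernel

theorem s17_k4 : ∀ a : ZMod 17, a ≠ 0 → ∀ b : ZMod 17, b ≠ 0 → b - a ≠ 0 → s17 b = s17 a →
    s17 (b - a) = s17 a → ∀ d : ZMod 17, d ≠ 0 → d - a ≠ 0 → d - b ≠ 0 → s17 d = s17 a →
    s17 (d - a) = s17 a → s17 (d - b) = s17 a → False := by decide +kernel

/-- Paley coloring -/
def f17 (x y : ZMod 17) : Bool := s17 (y - x)

theorem f17_sym (x y : ZMod 17) : f17 x y = f17 y x := by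
  unfold f17
  rw [← s17_neg, neg_sub]

theorem f17_k4 (x y z w : ZMod 17) (b : Bool) (h1 : x ≠ y ∧ f17 x y = b) (h2 : x ≠ z ∧ f17 x z = b)
    (h3 : x ≠ w ∧ f17 x w = b) (h4 : y ≠ z ∧ f17 y z = b) (h5 : y ≠ w ∧ f17 y w = b)
    (h6 : z ≠ w ∧ f17 z w = b) : False := by
  obtain ⟨n1, h1⟩ := h1
  subst h1
  unfold f17 at *
  have e : ∀ u v : ZMod 17, u - x - (v - x) = u - v := fun u v => by ring
  refine s17_k4 (y - x) (sub_ne_zero.2 n1.symm) (z - x) (sub_ne_zero.2 h2.1.symm) ?_ h2.2 ?_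
    (w - x) (sub_ne_zero.2 h3.1.symm) ?_ ?_ h3.2 ?_ ?_
  · rw [e]; exact sub_ne_zero.2 h4.1.symm
  · rw [e]; exact h4.2
  · rw [e]; exact sub_ne_zero.2 h5.1.symm
  · rw [e]; exact sub_ne_zero.2 h6.1.symm
  · rw [e]; exact h5.2
  · rw [e]; exact h6.2

section
variable {K : Type} [DecidableEq K] {i j : K}

theorem outer5 (hij : i ≠ j) : Outer (bcol f5 i j) {i, j} ∅ := by
  refine ⟨?_, bcol_gal _ _ _, ?_, ?_, ?_⟩
  · intro u v
    unfold bcol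
    rw [f5_sym]
  · intro x y _
    left
    unfold bcol
    split_ifs <;> simp
  · intro l _ x y z h1 h2 h3
    have g1 := bcol_ed hij h1
    have g2 := bcol_ed hij h2
    have g3 := bcol_ed hij h3
    exact f5_tri x y z g1.1 g2.1 g3.1 (g1.2.trans g2.2.symm) (g1.2.trans g3.2.symm)
  · intro l hl
    simp at hl

theorem outer17 (hij : i ≠ j) : Outer (bcol f17 i j) ∅ {i, j} := by
  refine ⟨?_, bcol_gal _ _ _, ?_, ?_, ?_⟩
  · intro u v
    unfold bcol
    rw [f17_sym]
  · intro x y _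
    right
    unfold bcol
    split_ifs <;> simp
  · intro l hl
    simp at hl
  · intro l _ x y z w hK
    obtain ⟨k1, k2, k3, k4, k5, k6⟩ := hK
    exact f17_k4 x y z w _ (bcol_ed hij k1) (bcol_ed hij k2) (bcol_ed hij k3) (bcol_ed hij k4)
      (bcol_ed hij k5) (bcol_ed hij k6)

theorem good_base : Good (fun _ _ : Fin 4 => i) ∅ {i} := by
  refine ⟨fun _ _ => rfl, fun _ _ _ _ _ _ => Or.inl rfl, fun _ _ _ => by simp, ?_, ?_⟩
  · intro l hl
    simp at hl
  · intro l _ x y z w e hK hex h1 h2 h3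
    obtain ⟨⟨k1, -⟩, ⟨k2, -⟩, ⟨k3, -⟩, ⟨k4, -⟩, ⟨k5, -⟩, ⟨k6, -⟩⟩ := hK
    have h0 := hex.1
    omega

theorem pull_two {M : Finset K} {n : ℕ} (h : M.card = n + 2) :
    ∃ i j, i ≠ j ∧ {i, j} ⊆ M ∧ (M \ {i, j}).card = n := by
  obtain ⟨i, hi, j, hj, hij⟩ := Finset.one_lt_card.1 (show 1 < M.card by omega)
  have hs : {i, j} ⊆ M := by
    intro x hx
    simp only [Finset.mem_insert, Finset.mem_singleton] at hx
    rcases hx with rfl | rfl <;> assumption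
  refine ⟨i, j, hij, hs, ?_⟩
  rw [Finset.card_sdiff_of_subset hs, Finset.card_pair hij]
  omega

theorem lb_main (b : ℕ) : ∀ (a : ℕ) (M R : Finset K), Disjoint M R → M.card = 2 * a →
    R.card = 2 * b + 1 → ∃ (V : Type) (_ : Fintype V) (c : V → V → K),
      Fintype.card V = 4 * 5 ^ a * 17 ^ b ∧ Good c M R := by
  induction b with
  | zero =>
    intro a
    induction a with
    | zero =>
      intro M R _ hM hR
      obtain rfl : M = ∅ := Finset.card_eq_zero.1 hM
      obtain ⟨i, rfl⟩ := Finset.card_eq_one.1 hR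
      exact ⟨Fin 4, inferInstance, fun _ _ => i, by simp, good_base⟩
    | succ a ih =>
      intro M R hd hM hR
      obtain ⟨i, j, hij, hsub, hcard⟩ := pull_two (show M.card = 2 * a + 2 by omega)
      obtain ⟨V, hV, c, hc, hg⟩ := ih (M \ {i, j}) R (hd.mono_left Finset.sdiff_subset) hcard hR
      refine ⟨ZMod 5 × V, inferInstance, lex (bcol f5 i j) c, ?_, ?_⟩
      · rw [Fintype.card_prod, hc, ZMod.card]
        ring
      · have := lex_good (outer5 hij) hg Finset.disjoint_sdiff (hd.mono_left hsub)
          (Finset.disjoint_empty_left _) (Finset.disjoint_empty_left _)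
        rwa [Finset.union_sdiff_of_subset hsub, Finset.empty_union] at this
  | succ b ih =>
    intro a M R hd hM hR
    obtain ⟨i, j, hij, hsub, hcard⟩ := pull_two (show R.card = (2 * b + 1) + 2 by omega)
    obtain ⟨V, hV, c, hc, hg⟩ := ih a M (R \ {i, j}) (hd.mono_right Finset.sdiff_subset) hM hcard
    refine ⟨ZMod 17 × V, inferInstance, lex (bcol f17 i j) c, ?_, ?_⟩
    · rw [Fintype.card_prod, hc, ZMod.card]
      ring
    · have := lex_good (outer17 hij) hg (Finset.disjoint_empty_left _)
        (Finset.disjoint_empty_left _) (hd.symm.mono_left hsub) Finset.disjoint_sdiff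
      rwa [Finset.union_sdiff_of_subset hsub, Finset.empty_union] at this
end


theorem mix_lt {k r : ℕ} {H : SimpleGraph (Fin 5)} {i : Fin k} (h : (i : ℕ) < r) :
    mixKH k r H i = ⟨Fin 5, H⟩ := if_pos h

theorem mix_ge {k r : ℕ} {H : SimpleGraph (Fin 5)} {i : Fin k} (h : ¬ (i : ℕ) < r) :
    mixKH k r H i = ⟨Fin 3, GK3⟩ := if_neg h

theorem copy_K3 {n k : ℕ} {c : Fin n → Fin n → Fin k} (hs : ∀ u v, c u v = c v u) {i : Fin k}
    {x y z : Fin n} (h1 : Ed c i x y) (h2 : Ed c i x z) (h3 : Ed c i y z) :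
    HasMonoCopy GK3 c i := by
  have g1 := h1.symm hs
  have g2 := h2.symm hs
  have g3 := h3.symm hs
  have key : ∀ a b : Fin 3, a ≠ b → Ed c i (![x, y, z] a) (![x, y, z] b) := by
    intro a b hab
    fin_cases a <;> fin_cases b <;> first | exact absurd rfl hab | assumption
  refine ⟨![x, y, z], ?_, ?_⟩
  · intro a b hab
    by_contra hne
    exact (key a b hne).1 hab
  · intro a b hab
    exact (key a b hab.ne).2

theorem copy_H {n k : ℕ} {c : Fin n → Fin n → Fin k} (hs : ∀ u v, c u v = c v u) {i : Fin k}
    {H : SimpleGraph (Fin 5)} (hH : H = GH1 ∨ H = GH2)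
    {x y z w e : Fin n} (hK : IsK4 c i x y z w) (h1 : Ed c i e x) (h2 : Ed c i e y)
    (h3 : e ≠ z) (h4 : e ≠ w) : HasMonoCopy H c i := by
  obtain ⟨k1, k2, k3, k4, k5, k6⟩ := hK
  have g1 := k1.symm hs
  have g2 := k2.symm hs
  have g3 := k3.symm hs
  have g4 := k4.symm hs
  have g5 := k5.symm hs
  have g6 := k6.symm hs
  have e1 := h1.symm hs
  have e2 := h2.symm hs
  have n1 := h1.1
  have n2 := h2.1
  rcases hH with rfl | rfl
  · refine ⟨![y, z, w, x, e], ?_, ?_⟩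
    · intro a b hab
      by_contra hne
      have key : ∀ a b : Fin 5, a ≠ b → ![y, z, w, x, e] a ≠ ![y, z, w, x, e] b := by
        intro a b hab
        fin_cases a <;> fin_cases b <;>
          first
          | exact absurd rfl hab
          | exact k1.1 | exact k2.1 | exact k3.1 | exact k4.1 | exact k5.1 | exact k6.1
          | exact g1.1 | exact g2.1 | exact g3.1 | exact g4.1 | exact g5.1 | exact g6.1
          | exact h1.1 | exact h2.1 | exact h3 | exact h4
          | exact e1.1 | exact e2.1 | exact h3.symm | exact h4.symm
      exact key a b hne hab
    · intro a b hab
      simp only [GH1, SimpleGraph.fromRel_adj] at hab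
      fin_cases a <;> fin_cases b <;>
        first
        | exact absurd hab (by decide)
        | exact k1.2 | exact k2.2 | exact k3.2 | exact k4.2 | exact k5.2 | exact k6.2
        | exact g1.2 | exact g2.2 | exact g3.2 | exact g4.2 | exact g5.2 | exact g6.2
        | exact h1.2 | exact e1.2
  · refine ⟨![z, e, w, x, y], ?_, ?_⟩
    · intro a b hab
      by_contra hne
      have key : ∀ a b : Fin 5, a ≠ b → ![z, e, w, x, y] a ≠ ![z, e, w, x, y] b := by
        intro a b hab
        fin_cases a <;> fin_cases b <;>
          first
          | exact absurd rfl hab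
          | exact k1.1 | exact k2.1 | exact k3.1 | exact k4.1 | exact k5.1 | exact k6.1
          | exact g1.1 | exact g2.1 | exact g3.1 | exact g4.1 | exact g5.1 | exact g6.1
          | exact h1.1 | exact h2.1 | exact h3 | exact h4
          | exact e1.1 | exact e2.1 | exact h3.symm | exact h4.symm
      exact key a b hne hab
    · intro a b hab
      simp only [GH2, SimpleGraph.sdiff_adj, SimpleGraph.top_adj, SimpleGraph.fromRel_adj] at hab
      fin_cases a <;> fin_cases b <;>
        first
        | exact absurd hab (by decide)
        | exact k1.2 | exact k2.2 | exact k3.2 | exact k4.2 | exact k5.2 | exact k6.2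
        | exact g1.2 | exact g2.2 | exact g3.2 | exact g4.2 | exact g5.2 | exact g6.2
        | exact h1.2 | exact e1.2 | exact h2.2 | exact e2.2

theorem H_adj {H : SimpleGraph (Fin 5)} (hH : H = GH1 ∨ H = GH2) :
    ∃ x y z w e : Fin 5, H.Adj x y ∧ H.Adj x z ∧ H.Adj x w ∧ H.Adj y z ∧ H.Adj y w ∧
      H.Adj z w ∧ H.Adj e x ∧ e ≠ y ∧ e ≠ z ∧ e ≠ w := by
  rcases hH with rfl | rfl
  · refine ⟨3, 0, 1, 2, 4, ?_⟩
    refine ⟨?_, ?_, ?_, ?_, ?_, ?_, ?_, ?_, ?_, ?_⟩ <;> simp [GH1]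
  · refine ⟨3, 0, 2, 4, 1, ?_⟩
    refine ⟨?_, ?_, ?_, ?_, ?_, ?_, ?_, ?_, ?_, ?_⟩ <;> simp [GH2]

/-- colors with the triangle -/
def setM (k r : ℕ) : Finset (Fin k) := Finset.univ.filter (fun i => ¬ (i : ℕ) < r)

/-- colors with `H` -/
def setR (k r : ℕ) : Finset (Fin k) := Finset.univ.filter (fun i => (i : ℕ) < r)

theorem mem_setM {k r : ℕ} {i : Fin k} : i ∈ setM k r ↔ ¬ (i : ℕ) < r := by simp [setM]

theorem mem_setR {k r : ℕ} {i : Fin k} : i ∈ setR k r ↔ (i : ℕ) < r := by simp [setR]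

theorem card_setR {k r : ℕ} (hr : r ≤ k) : (setR k r).card = r := by
  have : (setR k r) = (Finset.univ : Finset (Fin r)).map (Fin.castLEEmb hr) := by
    ext i
    rw [mem_setR]
    simp only [Finset.mem_map, Finset.mem_univ, true_and]
    constructor
    · intro h
      exact ⟨⟨i, h⟩, Fin.ext rfl⟩
    · rintro ⟨a, rfl⟩
      exact a.2
  rw [this, Finset.card_map, Finset.card_univ, Fintype.card_fin]

theorem card_setM {k r : ℕ} (hr : r ≤ k) : (setM k r).card = k - r := by
  have h : (setR k r).card + (setM k r).card = (Finset.univ : Finset (Fin k)).card :=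
    Finset.card_filter_add_card_filter_not _
  rw [card_setR hr, Finset.card_univ, Fintype.card_fin] at h
  omega

theorem disj_MR {k r : ℕ} : Disjoint (setM k r) (setR k r) := by
  rw [Finset.disjoint_left]
  intro i h1 h2
  rw [mem_setM] at h1
  rw [mem_setR] at h2
  exact h1 h2

theorem upper {H : SimpleGraph (Fin 5)} (hH : H = GH1 ∨ H = GH2) {k r n : ℕ} (hr : r ≤ k)
    (hn : gg (k - r) r < n) (c : Fin n → Fin n → Fin k) (hc : IsGallaiColoring c) :
    ∃ i : Fin k, HasMonoCopy (mixKH k r H i).2 c i := by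
  by_contra hcon
  push Not at hcon
  obtain ⟨hs, hrb⟩ := hc
  have hG : Gal c := by
    intro u v w h1 h2 h3
    by_contra hne
    push Not at hne
    exact hrb ⟨u, v, w, h1, h2, h3, hne.1, hne.2.1, hne.2.2⟩
  have hok : Ok c Finset.univ (setM k r) (setR k r) := by
    refine ⟨disj_MR, ?_, ?_, ?_⟩
    · intro x _ y _ _
      rw [mem_setM, mem_setR]
      exact (em _).symm
    · intro i hi x _ y _ z _ h1 h2 h3
      rw [mem_setM] at hi
      have := hcon i
      rw [mix_ge hi] at this
      exact this (copy_K3 hs h1 h2 h3)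
    · intro i hi x _ y _ z _ w _ e _ hK h1 h2 h3 h4
      rw [mem_setR] at hi
      have := hcon i
      rw [mix_lt hi] at this
      exact this (copy_H hs hH hK h1 h2 h3 h4)
  have := ub_main hs hG _ _ _ _ rfl hok
  rw [card_setM hr, card_setR hr, Finset.card_univ, Fintype.card_fin] at this
  omega

theorem lower {H : SimpleGraph (Fin 5)} (hH : H = GH1 ∨ H = GH2) {k r n a b : ℕ} (hr : r ≤ k)
    (h1 : k - r = 2 * a) (h2 : r = 2 * b + 1) (hn : n ≤ 4 * 5 ^ a * 17 ^ b) :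
    ∃ c : Fin n → Fin n → Fin k, IsGallaiColoring c ∧
      ∀ i : Fin k, ¬ HasMonoCopy (mixKH k r H i).2 c i := by
  obtain ⟨V, hV, c, hcard, hg⟩ := lb_main b a (setM k r) (setR k r) disj_MR
    ((card_setM hr).trans h1) ((card_setR hr).trans h2)
  obtain ⟨f⟩ : Nonempty (Fin n ↪ V) := Function.Embedding.nonempty_of_card_le (by
    rw [Fintype.card_fin, hcard]; exact hn)
  refine ⟨fun x y => c (f x) (f y), ⟨fun u v => hg.sym _ _, ?_⟩, ?_⟩
  · rintro ⟨u, v, w, n1, n2, n3, e1, e2, e3⟩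
    have := hg.gal (f u) (f v) (f w) (f.injective.ne n1) (f.injective.ne n2) (f.injective.ne n3)
    tauto
  · intro i
    by_cases hi : (i : ℕ) < r
    · rw [mix_lt hi]
      rintro ⟨g, hinj, hadj⟩
      obtain ⟨x, y, z, w, e, a1, a2, a3, a4, a5, a6, a7, m1, m2, m3⟩ := H_adj hH
      have hE : ∀ {p q : Fin 5}, H.Adj p q → Ed c i (f (g p)) (f (g q)) := fun h =>
        ⟨f.injective.ne (hinj.ne h.ne), hadj _ _ h⟩
      exact hg.noH i (mem_setR.2 hi) _ _ _ _ _
        ⟨hE a1, hE a2, hE a3, hE a4, hE a5, hE a6⟩ (hE a7) (f.injective.ne (hinj.ne m1))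
        (f.injective.ne (hinj.ne m2)) (f.injective.ne (hinj.ne m3))
    · rw [mix_ge hi]
      rintro ⟨g, hinj, hadj⟩
      have hE : ∀ {p q : Fin 3}, p ≠ q → Ed c i (f (g p)) (f (g q)) := fun h =>
        ⟨f.injective.ne (hinj.ne h), hadj _ _ h⟩
      exact hg.tri i (mem_setM.2 hi) (f (g 0)) (f (g 1)) (f (g 2)) (hE (by decide))
        (hE (by decide)) (hE (by decide))


/-- Theorem 1.4, case (a₄): for H ∈ {H₁, H₂}, k ≥ 1, 0 ≤ r ≤ k with k - r even and r
odd, GR_k((k-r)K₃, rH) = 4·5^((k-r)/2)·17^((r-1)/2) + 1. -/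
theorem GR_mixKH_even_odd (H : SimpleGraph (Fin 5)) (hH : H = GH1 ∨ H = GH2)
    (k r : ℕ) (hk : 1 ≤ k) (hr : r ≤ k) (h1 : Even (k - r)) (h2 : Odd r) :
    GR k (mixKH k r H) = 4 * 5 ^ ((k - r) / 2) * 17 ^ ((r - 1) / 2) + 1 := by
  obtain ⟨a, ha⟩ := h1
  obtain ⟨b, hb⟩ := h2
  have ea : (k - r) / 2 = a := by omega
  have eb : (r - 1) / 2 = b := by omega
  rw [ea, eb]
  have hgg : gg (k - r) r = 4 * 5 ^ a * 17 ^ b := by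
    unfold gg
    rw [show (k - r) % 2 = 0 by omega, show r % 2 = 1 by omega, show r / 2 = b by omega, ea]
    ring
  unfold GR
  apply le_antisymm
  · apply Nat.sInf_le
    intro c hc
    exact upper hH hr (by rw [hgg]; exact Nat.lt_succ_self _) c hc
  · apply le_csInf
    · refine ⟨4 * 5 ^ a * 17 ^ b + 1, fun c hc => ?_⟩
      exact upper hH hr (by rw [hgg]; exact Nat.lt_succ_self _) c hc
    · intro n hn
      by_contra hlt
      obtain ⟨c, hc, hno⟩ := lower hH hr (show k - r = 2 * a by omega) hb
        (show n ≤ 4 * 5 ^ a * 17 ^ b by omega)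
      obtain ⟨i, hi⟩ := hn c hc
      exact hno i hi
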